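/- Let M be an oriented matroid program of rank r on [n] ∪ {f,g} and let ṽ be a node of K_f that is neither the source nor the sink of K_f. Then for every e ∈ ṽ there exists a cocircuit Y of M/{f,g} with Y_e = + and Y_{e′} ∈ {+,0} for all e′ ∈ ṽ; consequently, composing such cocircuits yields a covector of M/{f,g} that is + on every element of ṽ. -/

import Mathlib

/-!
The covectors of an oriented matroid are exactly the sign vectors orthogonal to all its circuits.
To see this, vectors are shown to extend through a contraction by one element, so that the
vectors form an oriented matroid whose vectors are the original covectors; the conformal
decomposition of a vector into circuits does the rest. Consequently the restrictions of covectors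
of `M` are the covectors of `M ∖ f`, and the covectors of `M` vanishing at `f` and `g` are
covectors of `M / {f, g}`. Ranks are accessible through the closure operator defined by
covectors, which has the exchange property.

At a node `v` consider the covectors of `M` vanishing at `g` and nonnegative on `v`
(`IsDir`). The ones that are minimal on `v` (`IsEdge`) point along the edges leaving `v`. Since a
circuit through `f` has `r + 1` elements, such an edge direction is nonzero at `f` (unless `f` is
a coloop), and it yields an arc at `v` whose orientation is its sign at `f`
(`IsEdge.exists_arc`). Given two nodes `v ≠ w`, eliminating `g` between their cocircuits
produces a direction from `v` to `w`, whose negative is a direction from `w` to `v`. Hence, for each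
nonzero sign `s`, one of `v` and `w` has an edge direction with sign `s` at `f`
(`eq_of_no_edge`). So a node which is neither the source nor the sink has directions of both signs
at `f`; if `f` is a coloop, the covectors supported on `{f}` are such directions at every node
(`exists_dir_of_ne`).

For `e` in such a node `v`, some node `w` avoids `e`, and the direction from `v` to `w` is `+` at
`e` and nonnegative on `v`. Eliminating `f` between it and a direction of the opposite sign at
`f` gives a covector of `M / {f, g}` with the same two properties, and a cocircuit of
`M / {f, g}` conformal to it and nonzero at `e` is as required.
-/

open Set

/-- A *sign vector* on an ambient type `α`. -/
abbrev SignVec (α : Type*) := α → SignType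

namespace OMHK

variable {α : Type*}

/-- The support of a sign vector. -/
def supp (X : SignVec α) : Set α := {e | X e ≠ 0}

/-- A sign vector is nonnegative if every entry is `+` or `0`. -/
def Nonneg (X : SignVec α) : Prop := ∀ e, X e = 1 ∨ X e = 0

/-- Composition of sign vectors: `(X ∘ Y)ₑ = Xₑ` if `Xₑ ≠ 0`, else `Yₑ`. -/
def compose (X Y : SignVec α) : SignVec α := fun e => if X e ≠ 0 then X e else Y e

/-- The separation set `S(X,Y) = {e : Xₑ = -Yₑ ≠ 0}`. -/
def sep (X Y : SignVec α) : Set α := {e | X e = -(Y e) ∧ X e ≠ 0}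

/-- Two sign vectors are orthogonal if `S(X,Y)` and `S(X,-Y)` are both empty
or both nonempty. -/
def Orth (X Y : SignVec α) : Prop :=
  (sep X Y = ∅ ∧ sep X (-Y) = ∅) ∨ (sep X Y ≠ ∅ ∧ sep X (-Y) ≠ ∅)

/-- An oriented matroid with finite ground set inside the ambient type `α`,
presented by its collection of covectors (sign vectors supported on the
ground set), satisfying the covector axioms. -/
structure OrientedMatroid (α : Type*) where
  ground : Set α
  ground_finite : ground.Finite
  covectors : Set (SignVec α)
  supp_subset : ∀ X ∈ covectors, supp X ⊆ ground
  zero_mem : (0 : SignVec α) ∈ covectors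
  neg_mem : ∀ X ∈ covectors, -X ∈ covectors
  compose_mem : ∀ X ∈ covectors, ∀ Y ∈ covectors, compose X Y ∈ covectors
  elim : ∀ X ∈ covectors, ∀ Y ∈ covectors, ∀ e ∈ sep X Y,
    ∃ Z ∈ covectors, Z e = 0 ∧ ∀ e' ∉ sep X Y, Z e' = compose X Y e'

namespace OrientedMatroid

variable (M : OrientedMatroid α)

/-- A cocircuit: a nonzero covector of minimal support. -/
def IsCocircuit (X : SignVec α) : Prop :=
  X ∈ M.covectors ∧ X ≠ 0 ∧
    ∀ Y ∈ M.covectors, Y ≠ 0 → supp Y ⊆ supp X → supp Y = supp X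

/-- A vector: a sign vector supported on the ground set and orthogonal to
every covector. -/
def IsVector (X : SignVec α) : Prop :=
  supp X ⊆ M.ground ∧ ∀ Y ∈ M.covectors, Orth X Y

/-- A circuit: a nonzero vector of minimal support. -/
def IsCircuit (X : SignVec α) : Prop :=
  M.IsVector X ∧ X ≠ 0 ∧
    ∀ Y, M.IsVector Y → Y ≠ 0 → supp Y ⊆ supp X → supp Y = supp X

/-- A set is independent if it is contained in the ground set and contains
the support of no circuit. -/
def Indep (A : Set α) : Prop :=
  A ⊆ M.ground ∧ ∀ X, M.IsCircuit X → ¬ supp X ⊆ A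

/-- The rank of a subset: maximal cardinality of an independent subset of it. -/
noncomputable def rk (A : Set α) : ℕ :=
  sSup {k | ∃ I : Set α, I ⊆ A ∧ M.Indep I ∧ I.ncard = k}

/-- The rank of the oriented matroid. -/
noncomputable def rank : ℕ := M.rk M.ground

end OrientedMatroid

open scoped Classical in
/-- Zero out the coordinates in `A` (the restriction to the complement of `A`,
in ambient terms). -/
noncomputable def restrictAway (A : Set α) (X : SignVec α) : SignVec α :=
  fun e => if e ∈ A then 0 else X e

/-- `M'` is the deletion `M ∖ A`: its ground set is `M.ground ∖ A` and its
circuits are the circuits of `M` vanishing on `A`. -/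
def IsDeletion (M : OrientedMatroid α) (A : Set α) (M' : OrientedMatroid α) : Prop :=
  M'.ground = M.ground \ A ∧
  ∀ X, M'.IsCircuit X ↔ (M.IsCircuit X ∧ ∀ e ∈ A, X e = 0)

/-- `M'` is the contraction `M / A`: its ground set is `M.ground ∖ A` and its
circuits are the nonzero minimal-support members of the restrictions away from
`A` of circuits of `M`. -/
def IsContraction (M : OrientedMatroid α) (A : Set α) (M' : OrientedMatroid α) : Prop :=
  M'.ground = M.ground \ A ∧
  ∀ X, M'.IsCircuit X ↔
    (X ≠ 0 ∧ (∃ Y, M.IsCircuit Y ∧ X = restrictAway A Y) ∧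
      ∀ Z : SignVec α, Z ≠ 0 → (∃ Y, M.IsCircuit Y ∧ Z = restrictAway A Y) →
        supp Z ⊆ supp X → supp Z = supp X)

/-- `Nh` is an extension of `N` by the new element `h` (same rank). -/
def IsExtension (N : OrientedMatroid α) (h : α) (Nh : OrientedMatroid α) : Prop :=
  h ∉ N.ground ∧ Nh.ground = insert h N.ground ∧ Nh.rank = N.rank ∧
    IsDeletion Nh {h} N

/-- The element `h` is in general position in `Nh`: every circuit whose support
contains `h` has support of cardinality `rank + 1`. -/
def GenPos (Nh : OrientedMatroid α) (h : α) : Prop :=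
  ∀ X, Nh.IsCircuit X → X h ≠ 0 → (supp X).ncard = Nh.rank + 1

/-- A directed path from `a` to `b` in the digraph with arc relation `A`. -/
def IsDipath {V : Type*} (A : V → V → Prop) (p : List V) (a b : V) : Prop :=
  p ≠ [] ∧ p.head? = some a ∧ p.getLast? = some b ∧ p.Chain' A ∧ p.Nodup

/-! ### Oriented matroid programs.
We fix the ambient type `ℕ`; the ground set of a program is `[n] ∪ {f, g}`
where `[n] = {0, …, n-1}`, the objective element is `f = n` and the right hand
side element is `g = n + 1`.  Extensions use the fresh element `h = n + 2`. -/

/-- `[n] = {0, …, n - 1}`. -/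
def nset (n : ℕ) : Set ℕ := {k | k < n}

/-- `M` is an oriented matroid program of rank `r` on `[n] ∪ {f, g}`
(`f = n`, `g = n + 1`), where `Mf` denotes the deletion `M ∖ f`:
(i) every nonnegative cocircuit of `M ∖ f` has `g` in its support;
(ii) for every `e ∈ [n]` there is a nonnegative cocircuit `Y` of `M ∖ f`
with `Y e = +`; (iii) every circuit of `M` whose support contains `f` has
support of cardinality `r + 1`. -/
def IsProgram (M Mf : OrientedMatroid ℕ) (n r : ℕ) : Prop :=
  M.ground = nset n ∪ {n, n + 1} ∧ M.rank = r ∧ IsDeletion M {n} Mf ∧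
  (∀ Y, Mf.IsCocircuit Y → Nonneg Y → Y (n + 1) ≠ 0) ∧
  (∀ e, e < n → ∃ Y, Mf.IsCocircuit Y ∧ Nonneg Y ∧ Y e = 1) ∧
  (∀ X, M.IsCircuit X → X n ≠ 0 → (supp X).ncard = r + 1)

/-- A node of the program: `[n] ∖ supp Y` for `Y` a nonnegative cocircuit of
`M ∖ f`. -/
def IsNode (Mf : OrientedMatroid ℕ) (n : ℕ) (v : Set ℕ) : Prop :=
  ∃ Y, Mf.IsCocircuit Y ∧ Nonneg Y ∧ v = nset n \ supp Y

/-- The arc relation of the digraph `K_f`: `v → v'` when `v, v'` are adjacent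
nodes and the witnessing cocircuit `Y''` of `M` (zero at `g`, positive on
`v' ∖ v`, negative on `v ∖ v'`, zero on `v ∩ v'`, nonzero at `f`) satisfies
`Y'' f = Y'' e` for `e ∈ v ∖ v'`. -/
def Arc (M Mf : OrientedMatroid ℕ) (n r : ℕ) (v v' : Set ℕ) : Prop :=
  IsNode Mf n v ∧ IsNode Mf n v' ∧ v ≠ v' ∧ M.rk (v ∩ v') = r - 2 ∧
  ∃ Y, M.IsCocircuit Y ∧ Y (n + 1) = 0 ∧
    (∀ e ∈ v' \ v, Y e = 1) ∧ (∀ e ∈ v \ v', Y e = -1) ∧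
    (∀ e ∈ v ∩ v', Y e = 0) ∧ Y n ≠ 0 ∧ (∀ e ∈ v \ v', Y n = Y e)

/-- The source of `K_f`: the node with no incoming arcs. -/
def IsSource (M Mf : OrientedMatroid ℕ) (n r : ℕ) (v : Set ℕ) : Prop :=
  IsNode Mf n v ∧ ∀ u, ¬ Arc M Mf n r u v

/-- The sink of `K_f`: the node with no outgoing arcs. -/
def IsSink (M Mf : OrientedMatroid ℕ) (n r : ℕ) (v : Set ℕ) : Prop :=
  IsNode Mf n v ∧ ∀ u, ¬ Arc M Mf n r v u

/-- The arc relation of the digraph `K_h` determined by an extension `M̂` of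
`M/g` by `h = n + 2` in general position; `Mhf` denotes `M̂ ∖ f`. -/
def ArcH (M Mf Mhf : OrientedMatroid ℕ) (n r : ℕ) (v v' : Set ℕ) : Prop :=
  IsNode Mf n v ∧ IsNode Mf n v' ∧ v ≠ v' ∧ M.rk (v ∩ v') = r - 2 ∧
  ∃ Y, Mhf.IsCocircuit Y ∧
    (∀ e ∈ v' \ v, Y e = 1) ∧ (∀ e ∈ v \ v', Y e = -1) ∧
    (∀ e ∈ v ∩ v', Y e = 0) ∧ Y (n + 2) ≠ 0 ∧ (∀ e ∈ v \ v', Y (n + 2) = Y e)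

/-- `x` is a vertex of the subdigraph `K_{[f,-h]}`: there is a vector `X` of
`M̂` with `X₊ = x ∪ {h}` and `X₋ = {f}`. -/
def InKfmh (Mhat : OrientedMatroid ℕ) (n : ℕ) (x : Set ℕ) : Prop :=
  ∃ X, Mhat.IsVector X ∧ {e | X e = 1} = x ∪ {n + 2} ∧ {e | X e = -1} = {n}

/-- `x` is a vertex of the subdigraph `K_{[-h,-f]}`: there is a vector `X` of
`M̂` with `X₊ = x ∪ {f, h}` and `X₋ = ∅`. -/
def InKmhmf (Mhat : OrientedMatroid ℕ) (n : ℕ) (x : Set ℕ) : Prop :=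
  ∃ X, Mhat.IsVector X ∧ {e | X e = 1} = x ∪ {n, n + 2} ∧ {e | X e = -1} = (∅ : Set ℕ)

end OMHK
namespace OMHK

open OrientedMatroid

/-! ### Sign arithmetic, orthogonality and elimination -/

section General

variable {α : Type*}

theorem sign_cases (a : SignType) : a = 0 ∨ a = 1 ∨ a = -1 := by
  revert a; decide

theorem mul_eq_neg_one_iff (a b : SignType) : a * b = -1 ↔ a = -b ∧ a ≠ 0 := by
  revert a b; decide

theorem mul_eq_one_iff' (a b : SignType) : a * b = 1 ↔ a = b ∧ a ≠ 0 := by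
  revert a b; decide

theorem sign_neg_eq_zero : ∀ z : SignType, -z = 0 → z = 0 := by decide

theorem sign_neg_eq_of_ne : ∀ w s : SignType, s ≠ 0 → w ≠ 0 → w ≠ s → -w = s := by decide

theorem sign_split : ∀ z s : SignType, s ≠ 0 → (z = 0 ∨ z = s) ∨ -z = s := by decide

/-- Orthogonality in terms of the coordinatewise products. -/
theorem orth_iff (X Y : SignVec α) :
    Orth X Y ↔ ((∃ e, X e * Y e = 1) ↔ ∃ e, X e * Y e = -1) := by
  have h1 : sep X Y ≠ ∅ ↔ ∃ e, X e * Y e = -1 := by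
    rw [← Set.nonempty_iff_ne_empty]
    simp only [sep, Set.Nonempty, Set.mem_ofPred_eq, mul_eq_neg_one_iff]
  have h2 : sep X (-Y) ≠ ∅ ↔ ∃ e, X e * Y e = 1 := by
    rw [← Set.nonempty_iff_ne_empty]
    simp only [sep, Set.Nonempty, Set.mem_ofPred_eq, mul_eq_one_iff', Pi.neg_apply, neg_neg]
  unfold Orth
  rw [← h1, ← h2]
  tauto

/-- For a family closed under negation, orthogonality to the whole family only needs to be
tested on members whose products with `V` are all nonnegative. -/
theorem forall_orth_iff (S : Set (SignVec α)) (hS : ∀ X ∈ S, -X ∈ S) (V : SignVec α) :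
    (∀ Y ∈ S, Orth V Y) ↔
      ∀ Y ∈ S, (∀ e, V e * Y e ≠ -1) → ∀ e, V e * Y e ≠ 1 := by
  constructor
  · intro h Y hY h1 e he
    obtain ⟨e', he'⟩ := ((orth_iff _ _).1 (h Y hY)).1 ⟨e, he⟩
    exact h1 e' he'
  · intro h Y hY
    rw [orth_iff]
    by_contra hc
    by_cases h1 : ∃ e, V e * Y e = 1
    · have h2 : ∀ e, V e * Y e ≠ -1 := fun e he => hc (by tauto)
      obtain ⟨e, he⟩ := h1
      exact h Y hY h2 e he
    · have h2 : ∃ e, V e * Y e = -1 := by tauto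
      push Not at h1
      obtain ⟨e, he⟩ := h2
      refine h (-Y) (hS Y hY) (fun a ha => h1 a ?_) e ?_
      · simpa using congrArg Neg.neg ha
      · simp [he]

theorem orth_comm (X Y : SignVec α) : Orth X Y ↔ Orth Y X := by
  simp only [orth_iff, mul_comm]

theorem compose_of_ne {X Y : SignVec α} {e : α} (h : X e ≠ 0) : compose X Y e = X e := by
  simp [compose, h]

theorem compose_of_eq {X Y : SignVec α} {e : α} (h : X e = 0) : compose X Y e = Y e := by
  simp [compose, h]

theorem restrictAway_mem {A : Set α} {X : SignVec α} {e : α} (h : e ∈ A) :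
    restrictAway A X e = 0 := by
  simp [restrictAway, h]

theorem restrictAway_notMem {A : Set α} {X : SignVec α} {e : α} (h : e ∉ A) :
    restrictAway A X e = X e := by
  simp [restrictAway, h]

namespace OrientedMatroid

variable (M : OrientedMatroid α)

/-- Covector elimination, phrased with products. -/
theorem elim_mul {X Y : SignVec α} (hX : X ∈ M.covectors) (hY : Y ∈ M.covectors) {e : α}
    (he : X e * Y e = -1) :
    ∃ Z ∈ M.covectors, Z e = 0 ∧ ∀ a, X a * Y a ≠ -1 →
      (X a ≠ 0 → Z a = X a) ∧ (X a = 0 → Z a = Y a) := by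
  obtain ⟨Z, hZ, h0, h1⟩ := M.elim X hX Y hY e ((mul_eq_neg_one_iff _ _).1 he)
  refine ⟨Z, hZ, h0, fun a ha => ?_⟩
  have := h1 a (fun h => ha ((mul_eq_neg_one_iff _ _).2 h))
  exact ⟨fun h => this.trans (compose_of_ne h), fun h => this.trans (compose_of_eq h)⟩

theorem eq_zero_of_notMem {X : SignVec α} (hX : X ∈ M.covectors) {e : α}
    (he : e ∉ M.ground) : X e = 0 := by
  by_contra h
  exact he (M.supp_subset X hX h)

theorem isVector_iff (V : SignVec α) :
    M.IsVector V ↔ supp V ⊆ M.ground ∧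
      ∀ Y ∈ M.covectors, (∀ e, V e * Y e ≠ -1) → ∀ e, V e * Y e ≠ 1 := by
  unfold IsVector
  rw [forall_orth_iff _ M.neg_mem]

/-! ### Minors and the extension of vectors through a contraction -/

/-- The contraction `M / A`, on the level of covectors: keep the covectors that vanish on `A`. -/
def con (A : Set α) : OrientedMatroid α where
  ground := M.ground \ A
  ground_finite := M.ground_finite.subset Set.sdiff_subset
  covectors := {X | X ∈ M.covectors ∧ ∀ e ∈ A, X e = 0}
  supp_subset := fun X hX e he => ⟨M.supp_subset X hX.1 he, fun h => he (hX.2 e h)⟩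
  zero_mem := ⟨M.zero_mem, fun _ _ => rfl⟩
  neg_mem := fun X hX => ⟨M.neg_mem X hX.1, fun e he => by simp [hX.2 e he]⟩
  compose_mem := fun X hX Y hY => ⟨M.compose_mem X hX.1 Y hY.1, fun e he => by
    rw [compose_of_eq (hX.2 e he), hY.2 e he]⟩
  elim := by
    intro X hX Y hY e he
    obtain ⟨Z, hZ, h0, h1⟩ := M.elim X hX.1 Y hY.1 e he
    refine ⟨Z, ⟨hZ, fun a ha => ?_⟩, h0, h1⟩
    rw [h1 a (fun h => h.2 (hX.2 a ha)), compose_of_eq (hX.2 a ha), hY.2 a ha]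

/-- The deletion `M ∖ A`, on the level of covectors: zero out the coordinates in `A`. -/
def del (A : Set α) : OrientedMatroid α where
  ground := M.ground \ A
  ground_finite := M.ground_finite.subset Set.sdiff_subset
  covectors := restrictAway A '' M.covectors
  supp_subset := by
    rintro _ ⟨X, hX, rfl⟩ e he
    by_cases h : e ∈ A
    · exact absurd (restrictAway_mem h) he
    · refine ⟨M.supp_subset X hX ?_, h⟩
      have he' : restrictAway A X e ≠ 0 := he
      rwa [restrictAway_notMem h] at he'
  zero_mem := ⟨0, M.zero_mem, by funext e; simp [restrictAway]⟩
  neg_mem := by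
    rintro _ ⟨X, hX, rfl⟩
    refine ⟨-X, M.neg_mem X hX, ?_⟩
    funext e
    by_cases h : e ∈ A <;> simp [restrictAway, h]
  compose_mem := by
    rintro _ ⟨X, hX, rfl⟩ _ ⟨Y, hY, rfl⟩
    refine ⟨compose X Y, M.compose_mem X hX Y hY, ?_⟩
    funext e
    by_cases h : e ∈ A <;> simp [restrictAway, compose, h]
  elim := by
    rintro _ ⟨X, hX, rfl⟩ _ ⟨Y, hY, rfl⟩ e he
    have hA : e ∉ A := fun h => he.2 (restrictAway_mem h)
    have he' : e ∈ sep X Y := by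
      simpa [sep, restrictAway, hA] using he
    obtain ⟨Z, hZ, h0, h1⟩ := M.elim X hX Y hY e he'
    refine ⟨restrictAway A Z, ⟨Z, hZ, rfl⟩, by rw [restrictAway_notMem hA, h0], fun a ha => ?_⟩
    by_cases h : a ∈ A
    · simp [restrictAway, compose, h]
    · have : a ∉ sep X Y := by
        simpa [sep, restrictAway, h] using ha
      have := h1 a this
      simpa [restrictAway, compose, h] using this

/-- The vectors of a deletion are the vectors supported off the deleted set. -/
theorem del_isVector_iff (A : Set α) (V : SignVec α) :
    (M.del A).IsVector V ↔ M.IsVector V ∧ ∀ e ∈ A, V e = 0 := by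
  have key : ∀ (X : SignVec α), (∀ e ∈ A, V e = 0) → ∀ e,
      V e * restrictAway A X e = V e * X e := by
    intro X h e
    by_cases hA : e ∈ A
    · simp [h e hA]
    · rw [restrictAway_notMem hA]
  constructor
  · rintro ⟨h1, h2⟩
    have hA : ∀ e ∈ A, V e = 0 := fun e he => by
      by_contra h
      exact (h1 h).2 he
    refine ⟨⟨fun e he => (h1 he).1, fun Y hY => ?_⟩, hA⟩
    have := h2 _ ⟨Y, hY, rfl⟩
    rw [orth_iff] at this ⊢
    simpa only [key Y hA] using this
  · rintro ⟨⟨h1, h2⟩, hA⟩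
    refine ⟨fun e he => ⟨h1 he, fun h => he (hA e h)⟩, ?_⟩
    rintro _ ⟨Y, hY, rfl⟩
    have := h2 Y hY
    rw [orth_iff] at this ⊢
    simpa only [key Y hA] using this

open Classical in
/-- A sign vector orthogonal to all covectors vanishing at `e` becomes orthogonal to all
covectors after a suitable choice of its entry at `e`. -/
theorem exists_update_orth (T : SignVec α) (e : α)
    (hT : ∀ X ∈ M.covectors, X e = 0 → Orth T X) :
    ∃ s, ∀ X ∈ M.covectors, Orth (Function.update T e s) X := by
  have hT' : ∀ X ∈ M.covectors, X e = 0 → (∀ a, a ≠ e → T a * X a ≠ -1) →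
      ∀ a, a ≠ e → T a * X a = 0 := by
    intro X hX h0 h1 a ha
    have h2 : ∀ a, T a * X a ≠ -1 := by
      intro b
      by_cases hb : b = e
      · subst hb; simp [h0]
      · exact h1 b hb
    have h3 := hT X hX h0
    rw [orth_iff] at h3
    rcases sign_cases (T a * X a) with h | h | h
    · exact h
    · obtain ⟨b, hb⟩ := h3.1 ⟨a, h⟩
      exact absurd hb (h2 b)
    · exact absurd h (h2 a)
  by_cases hP : ∃ X ∈ M.covectors, (∀ a, a ≠ e → T a * X a ≠ -1) ∧
      ∃ a, a ≠ e ∧ T a * X a = 1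
  · obtain ⟨X, hX, hX1, a₀, ha₀, hX2⟩ := hP
    have hXe : X e ≠ 0 := fun h => by
      have := hT' X hX h hX1 a₀ ha₀
      rw [this] at hX2
      exact absurd hX2 (by decide)
    -- A covector compatible with `T` off `e` cannot have the sign opposite to `X` at `e`.
    have hopp : ∀ Y ∈ M.covectors, (∀ a, a ≠ e → T a * Y a ≠ -1) → X e * Y e ≠ -1 := by
      intro Y hY hY1 hc
      obtain ⟨Z, hZ, hZe, hZ1⟩ := M.elim_mul hX hY hc
      have hTZ : ∀ a, a ≠ e → T a * Z a ≠ -1 := by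
        intro a ha
        by_cases hs : X a * Y a = -1
        · have : T a = 0 := by
            have h1 := hX1 a ha
            have h2 := hY1 a ha
            revert hs h1 h2
            generalize T a = t; generalize X a = x; generalize Y a = y
            revert t x y; decide
          simp [this]
        · by_cases hx : X a = 0
          · rw [(hZ1 a hs).2 hx]; exact hY1 a ha
          · rw [(hZ1 a hs).1 hx]; exact hX1 a ha
      have h0 := hT' Z hZ hZe hTZ a₀ ha₀
      have hs : X a₀ * Y a₀ ≠ -1 := by
        have h2 := hY1 a₀ ha₀
        revert h2 hX2
        generalize T a₀ = t; generalize X a₀ = x; generalize Y a₀ = y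
        revert t x y; decide
      rw [(hZ1 a₀ hs).1 (by intro h; simp [h] at hX2), hX2] at h0
      exact absurd h0 (by decide)
    refine ⟨-X e, (forall_orth_iff _ M.neg_mem _).2 fun Y hY hY1 => ?_⟩
    have hY1' : ∀ a, a ≠ e → T a * Y a ≠ -1 := fun a ha => by
      simpa [Function.update_of_ne ha] using hY1 a
    have hYe : Y e = 0 := by
      have h1 := hY1 e
      have h2 := hopp Y hY hY1'
      simp only [Function.update_self] at h1
      revert h1 h2 hXe
      generalize X e = x; generalize Y e = y
      revert x y; decide
    intro a
    by_cases ha : a = e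
    · subst ha; simp [hYe]
    · rw [Function.update_of_ne ha, hT' Y hY hYe hY1' a ha]; decide
  · push Not at hP
    refine ⟨0, (forall_orth_iff _ M.neg_mem _).2 fun Y hY hY1 a => ?_⟩
    by_cases ha : a = e
    · subst ha; simp
    · rw [Function.update_of_ne ha]
      exact hP Y hY (fun b hb => by simpa [Function.update_of_ne hb] using hY1 b) a ha

/-- Vectors of a contraction `M / B` extend to vectors of `M`. -/
theorem exists_vector_extension {B : Set α} (hB : B ⊆ M.ground) (T : SignVec α)
    (hT : supp T ⊆ M.ground)
    (hO : ∀ X ∈ M.covectors, (∀ b ∈ B, X b = 0) → Orth T X) :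
    ∃ V, M.IsVector V ∧ ∀ a ∉ B, V a = T a := by
  classical
  have hfin : B.Finite := M.ground_finite.subset hB
  induction B, hfin using Set.Finite.induction_on generalizing T with
  | empty => exact ⟨T, ⟨hT, fun Y hY => hO Y hY (by simp)⟩, fun _ _ => rfl⟩
  | @insert b B hb hfin ih =>
    obtain ⟨s, hs⟩ := (M.con B).exists_update_orth T b (fun X hX h0 =>
      hO X hX.1 (by
        intro c hc
        rcases hc with rfl | hc
        · exact h0
        · exact hX.2 c hc))
    obtain ⟨V, hV, hV1⟩ := ih (fun x hx => hB (Or.inr hx)) (Function.update T b s) (by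
      intro a ha
      by_cases hab : a = b
      · subst hab; exact hB (Or.inl rfl)
      · have ha' : Function.update T b s a ≠ 0 := ha
        rw [Function.update_of_ne hab] at ha'
        exact hT ha') (fun X hX h0 => hs X ⟨hX, h0⟩)
    refine ⟨V, hV, fun a ha => ?_⟩
    rw [hV1 a (fun h => ha (Or.inr h)), Function.update_of_ne]
    rintro rfl
    exact ha (Or.inl rfl)

/-! ### Duality -/

/-- A sign vector orthogonal to every vector is a covector. -/
theorem mem_covectors_of_orth_vectors (Y : SignVec α) (hY : supp Y ⊆ M.ground)
    (hO : ∀ V, M.IsVector V → Orth V Y) : Y ∈ M.covectors := by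
  classical
  obtain ⟨k, hk⟩ : ∃ k, M.ground.ncard = k := ⟨_, rfl⟩
  induction k using Nat.strong_induction_on generalizing M Y with
  | _ k ih =>
  have hlt : ∀ e ∈ M.ground, (M.ground \ {e}).ncard < k := fun e he => by
    rw [← hk]; exact Set.ncard_sdiff_singleton_lt_of_mem he M.ground_finite
  by_cases hfull : ∀ e ∈ M.ground, Y e ≠ 0
  · by_contra hYM
    -- By induction every deletion contains the restriction of `Y`; then a covector compatible
    -- with `Y` could be completed to `Y`, so `Y` is itself a vector.
    have hdel : ∀ e ∈ M.ground, ∃ X ∈ M.covectors, ∀ a, a ≠ e → X a = Y a := by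
      intro e he
      have : restrictAway {e} Y ∈ (M.del {e}).covectors := by
        refine ih _ (hlt e he) (M.del {e}) _ ?_ ?_ rfl
        · intro a ha
          by_cases hae : a ∈ ({e} : Set α)
          · exact absurd (restrictAway_mem hae) ha
          · have ha' : restrictAway {e} Y a ≠ 0 := ha
            rw [restrictAway_notMem hae] at ha'
            exact ⟨hY ha', hae⟩
        · intro V hV
          rw [del_isVector_iff] at hV
          have h1 := hO V hV.1
          rw [orth_iff] at h1 ⊢
          have : ∀ a, V a * restrictAway {e} Y a = V a * Y a := by
            intro a
            by_cases hae : a ∈ ({e} : Set α)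
            · simp [hV.2 a hae]
            · rw [restrictAway_notMem hae]
          simpa only [this] using h1
      obtain ⟨X, hX, hXY⟩ := this
      refine ⟨X, hX, fun a ha => ?_⟩
      have := congrFun hXY a
      rwa [restrictAway_notMem (by simpa using ha), restrictAway_notMem (by simpa using ha)]
        at this
    have hvec : M.IsVector Y := by
      rw [isVector_iff]
      refine ⟨hY, fun X hX h1 e he => hYM ?_⟩
      have heg : e ∈ M.ground := hY (show Y e ≠ 0 from fun h => by simp [h] at he)
      obtain ⟨W, hW, hWY⟩ := hdel e heg
      have : compose X W = Y := by
        funext a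
        by_cases hXa : X a = 0
        · have hae : a ≠ e := by rintro rfl; simp [hXa] at he
          rw [compose_of_eq hXa, hWY a hae]
        · rw [compose_of_ne hXa]
          have h2 := h1 a
          have h3 := hfull a (M.supp_subset X hX hXa)
          revert h2 h3 hXa
          generalize X a = x; generalize Y a = y
          revert x y; decide
      exact this ▸ M.compose_mem X hX W hW
    apply hYM
    have h0 := hO Y hvec
    rw [orth_iff] at h0
    have : Y = 0 := by
      funext a
      by_contra ha
      have ha1 : Y a * Y a = 1 := by
        change Y a ≠ 0 at ha
        revert ha; generalize Y a = y; revert y; decide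
      obtain ⟨b, hb⟩ := h0.1 ⟨a, ha1⟩
      revert hb; generalize Y b = y; revert y; decide
    rw [this]; exact M.zero_mem
  · push Not at hfull
    obtain ⟨e, he, hYe⟩ := hfull
    have : Y ∈ (M.con {e}).covectors := by
      refine ih _ (hlt e he) (M.con {e}) _ ?_ ?_ rfl
      · intro a ha
        refine ⟨hY ha, ?_⟩
        rintro rfl
        exact ha hYe
      · intro V hV
        obtain ⟨V', hV', hVV'⟩ := M.exists_vector_extension (B := {e}) (by simpa using he) V
          (fun a ha => (hV.1 ha).1) (fun X hX h0 => hV.2 X ⟨hX, h0⟩)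
        have h1 := hO V' hV'
        rw [orth_iff] at h1 ⊢
        have : ∀ a, V a * Y a = V' a * Y a := by
          intro a
          by_cases hae : a ∈ ({e} : Set α)
          · rw [Set.mem_singleton_iff] at hae; simp [hae, hYe]
          · rw [hVV' a hae]
        simpa only [this] using h1
    exact this.1

/-- The dual oriented matroid: its covectors are the vectors of `M`. -/
def dual : OrientedMatroid α where
  ground := M.ground
  ground_finite := M.ground_finite
  covectors := {V | M.IsVector V}
  supp_subset := fun _ hV => hV.1
  zero_mem := ⟨fun e he => absurd rfl he, fun Y _ => by simp [orth_iff]⟩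
  neg_mem := by
    intro V hV
    refine ⟨fun e he => hV.1 (show V e ≠ 0 from fun h => he (by simp [h])), fun Y hY => ?_⟩
    have h := hV.2 (-Y) (M.neg_mem Y hY)
    rw [orth_iff] at h ⊢
    simpa using h
  compose_mem := by
    intro V hV W hW
    refine (M.isVector_iff _).2 ⟨fun e he => ?_, fun Y hY h1 => ?_⟩
    · by_cases h : V e = 0
      · have he' : compose V W e ≠ 0 := he
        rw [compose_of_eq h] at he'
        exact hW.1 he'
      · exact hV.1 h
    · have hVY := ((M.isVector_iff V).1 hV).2 Y hY (fun e he => by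
        refine h1 e ?_
        rwa [compose_of_ne (by intro h; simp [h] at he)])
      intro e he
      by_cases h : V e = 0
      · refine ((M.isVector_iff W).1 hW).2 Y hY (fun a ha => ?_) e
          (by rwa [compose_of_eq h] at he)
        by_cases h' : V a = 0
        · exact h1 a (by rwa [compose_of_eq h'])
        · have h2 := hVY a
          have h3 := h1 a
          rw [compose_of_ne h'] at h3
          revert h2 h3 h' ha
          generalize V a = v; generalize W a = w; generalize Y a = y
          revert v w y; decide
      · exact hVY e (by rwa [compose_of_ne h] at he)
  elim := by
    classical
    intro V hV W hW e he
    -- Prescribe `V ∘ W` off the separation set and `0` at `e`, and extend over the rest.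
    let T : SignVec α := fun a => if a ∈ sep V W then 0 else compose V W a
    have hTs : ∀ a ∈ sep V W, T a = 0 := fun a ha => by simp [T, ha]
    have hTn : ∀ a ∉ sep V W, T a = compose V W a := fun a ha => by simp [T, ha]
    have hsupp : supp T ⊆ M.ground := by
      intro a ha
      by_cases hs : a ∈ sep V W
      · exact absurd (hTs a hs) ha
      · have ha' : T a ≠ 0 := ha
        rw [hTn a hs] at ha'
        by_cases h : V a = 0
        · rw [compose_of_eq h] at ha'; exact hW.1 ha'
        · exact hV.1 h
    obtain ⟨Z, hZ, hZT⟩ := M.exists_vector_extension (B := sep V W \ {e})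
      (fun a ha => hV.1 ha.1.2) T hsupp (by
        refine (forall_orth_iff {X | X ∈ M.covectors ∧ ∀ b ∈ sep V W \ {e}, X b = 0} ?_ T).2 ?_
          |> fun h X hX h0 => h X ⟨hX, h0⟩
        · exact fun X hX => ⟨M.neg_mem X hX.1, fun b hb => by simp [hX.2 b hb]⟩
        · rintro X ⟨hX, hX0⟩ h1
          have hV2 := ((M.isVector_iff V).1 hV).2
          have hW2 := ((M.isVector_iff W).1 hW).2
          -- off `e`, the products of `X` with `V` and `W` are as good as those with `T`
          have hVn : ∀ a, a ≠ e → V a * X a ≠ -1 := by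
            intro a ha
            by_cases hs : a ∈ sep V W
            · simp [hX0 a ⟨hs, ha⟩]
            · by_cases h : V a = 0
              · simp [h]
              · have := h1 a
                rwa [hTn a hs, compose_of_ne h] at this
          have hWn : ∀ a, a ≠ e → W a * X a ≠ -1 := by
            intro a ha
            by_cases hs : a ∈ sep V W
            · simp [hX0 a ⟨hs, ha⟩]
            · have h2 := h1 a
              rw [hTn a hs] at h2
              have hs' : ¬ (V a = -W a ∧ V a ≠ 0) := hs
              simp only [compose] at h2
              revert h2 hs'
              generalize V a = v; generalize W a = w; generalize X a = x
              revert v w x; decide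
          have hVW : V e = -W e ∧ V e ≠ 0 := he
          have hXe : X e = 0 := by
            by_contra hXe
            by_cases hp : V e * X e = 1
            · refine hV2 X hX (fun a => ?_) e hp
              by_cases ha : a = e
              · subst ha; rw [hp]; decide
              · exact hVn a ha
            · have hp' : W e * X e = 1 := by
                revert hp hVW hXe
                generalize V e = v; generalize W e = w; generalize X e = x
                revert v w x; decide
              refine hW2 X hX (fun a => ?_) e hp'
              by_cases ha : a = e
              · subst ha; rw [hp']; decide
              · exact hWn a ha
          have hV3 := hV2 X hX (fun a => by
            by_cases ha : a = e
            · subst ha; simp [hXe]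
            · exact hVn a ha)
          have hW3 := hW2 X hX (fun a => by
            by_cases ha : a = e
            · subst ha; simp [hXe]
            · exact hWn a ha)
          intro a ha
          by_cases hs : a ∈ sep V W
          · rw [hTs a hs, zero_mul] at ha
            exact absurd ha (by decide)
          · rw [hTn a hs] at ha
            by_cases h : V a = 0
            · rw [compose_of_eq h] at ha; exact hW3 a ha
            · rw [compose_of_ne h] at ha; exact hV3 a ha)
    refine ⟨Z, hZ, ?_, fun a ha => ?_⟩
    · rw [hZT e (fun h => h.2 rfl), hTs e he]
    · rw [hZT a (fun h => ha h.1), hTn a ha]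

/-- Conformal decomposition: below every covector `X` and through every `e` in its support there
is a cocircuit conforming to `X`. -/
theorem exists_conformal_cocircuit {X : SignVec α} (hX : X ∈ M.covectors) {e : α}
    (he : X e ≠ 0) :
    ∃ C, M.IsCocircuit C ∧ C e = X e ∧ ∀ a, C a = 0 ∨ C a = X a := by
  obtain ⟨k, hk⟩ : ∃ k, (supp X).ncard = k := ⟨_, rfl⟩
  induction k using Nat.strong_induction_on generalizing X with
  | _ k ih =>
  have hfin : ∀ Y ∈ M.covectors, (supp Y).Finite := fun Y hY =>
    M.ground_finite.subset (M.supp_subset Y hY)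
  by_cases hc : M.IsCocircuit X
  · exact ⟨X, hc, rfl, fun a => Or.inr rfl⟩
  -- first a covector of smaller support with the right sign at `e`, not yet conformal
  have hF : ∃ Z ∈ M.covectors, supp Z ⊂ supp X ∧ Z e = X e := by
    have : ∃ Y ∈ M.covectors, Y ≠ 0 ∧ supp Y ⊂ supp X := by
      by_contra h
      refine hc ⟨hX, fun h0 => he (by simp [h0]), fun Y hY hY0 hs => ?_⟩
      by_contra hne
      exact h ⟨Y, hY, hY0, hs.ssubset_of_ne hne⟩
    obtain ⟨Y, hY, hY0, hs⟩ := this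
    by_cases hYe : Y e = 0
    · obtain ⟨f, hf⟩ : ∃ f, Y f ≠ 0 := by
        by_contra h
        push Not at h
        exact hY0 (funext h)
      have hXf : X f ≠ 0 := hs.1 hf
      obtain ⟨Y', hY', hY'0, hfY⟩ : ∃ Y' ∈ M.covectors, (∀ a, Y a = 0 ↔ Y' a = 0) ∧
          X f * Y' f = -1 := by
        by_cases h : X f * Y f = -1
        · exact ⟨Y, hY, fun _ => Iff.rfl, h⟩
        · refine ⟨-Y, M.neg_mem Y hY, fun a => by simp, ?_⟩
          rw [Pi.neg_apply]
          revert h hf hXf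
          generalize X f = x; generalize Y f = y
          revert x y; decide
      obtain ⟨Z, hZ, hZf, hZ1⟩ := M.elim_mul hX hY' hfY
      have hsub : supp Z ⊆ supp X := by
        intro a ha hXa
        have : Y a = 0 := by
          by_contra h
          exact hs.1 h hXa
        refine ha ?_
        rw [(hZ1 a (by simp [hXa])).2 hXa, ← hY'0 a, this]
      refine ⟨Z, hZ, ⟨hsub, fun h => h hXf hZf⟩, ?_⟩
      exact (hZ1 e (by simp [(hY'0 e).1 hYe])).1 he
    · have hXe := hs.1 (show e ∈ supp Y from hYe)
      by_cases h : Y e = X e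
      · exact ⟨Y, hY, hs, h⟩
      · refine ⟨-Y, M.neg_mem Y hY, ?_, ?_⟩
        · have : supp (-Y) = supp Y := by ext a; simp [supp]
          rwa [this]
        · rw [Pi.neg_apply]
          revert h hYe he
          generalize X e = x; generalize Y e = y
          revert x y; decide
  -- among these, one with the fewest sign disagreements with `X` is conformal
  have hG : ∃ Z ∈ M.covectors, supp Z ⊂ supp X ∧ Z e = X e ∧ ∀ a, X a * Z a ≠ -1 := by
    obtain ⟨Z, hZ, hZs, hZe⟩ := hF
    obtain ⟨m, hm⟩ : ∃ m, {a | X a * Z a = -1}.ncard = m := ⟨_, rfl⟩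
    induction m using Nat.strong_induction_on generalizing Z with
    | _ m ihm =>
    by_cases hconf : ∀ a, X a * Z a ≠ -1
    · exact ⟨Z, hZ, hZs, hZe, hconf⟩
    push Not at hconf
    obtain ⟨f, hf⟩ := hconf
    obtain ⟨Z', hZ', hZ'f, hZ'1⟩ := M.elim_mul hX hZ hf
    have hXf : X f ≠ 0 := by intro h; simp [h] at hf
    have hsub : supp Z' ⊆ supp X := by
      intro a ha hXa
      have : Z a = 0 := by
        by_contra h
        exact hZs.1 h hXa
      exact ha (by rw [(hZ'1 a (by simp [hXa])).2 hXa, this])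
    have hval : ∀ a, X a * Z a ≠ -1 → X a * Z' a ≠ -1 := by
      intro a ha
      by_cases hXa : X a = 0
      · simp [hXa]
      · rw [(hZ'1 a ha).1 hXa]
        generalize X a = x; revert x; decide
    refine ihm _ ?_ Z' hZ' ⟨hsub, fun h => h hXf hZ'f⟩ ?_ rfl
    · rw [← hm]
      refine Set.ncard_lt_ncard ⟨fun a ha => ?_, fun h => ?_⟩ ?_
      · by_contra hc
        exact hval a hc ha
      · have : X f * Z' f = -1 := h hf
        simp [hZ'f] at this
      · exact (hfin X hX).subset fun a (ha : X a * Z a = -1) (h : X a = 0) => by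
          simp [h] at ha
    · refine (hZ'1 e ?_).1 he
      rw [hZe]
      generalize X e = x; revert x; decide
  obtain ⟨Z, hZ, hZs, hZe, hZc⟩ := hG
  obtain ⟨C, hC, hCe, hC1⟩ := ih _ (hk ▸ Set.ncard_lt_ncard hZs (hfin X hX)) hZ
    (hZe ▸ he) rfl
  refine ⟨C, hC, hCe.trans hZe, fun a => ?_⟩
  rcases hC1 a with h | h
  · exact Or.inl h
  · by_cases hZa : Z a = 0
    · exact Or.inl (h.trans hZa)
    · have h1 : X a ≠ 0 := hZs.1 hZa
      have h2 := hZc a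
      right
      rw [h]
      revert h1 h2 hZa
      generalize X a = x; generalize Z a = z
      revert x z; decide

theorem dual_isCocircuit_iff (X : SignVec α) : M.dual.IsCocircuit X ↔ M.IsCircuit X := Iff.rfl

/-- Covectors are exactly the sign vectors on the ground set orthogonal to all circuits. -/
theorem mem_covectors_of_orth_circuits (Y : SignVec α) (hY : supp Y ⊆ M.ground)
    (hO : ∀ C, M.IsCircuit C → Orth C Y) : Y ∈ M.covectors := by
  refine M.mem_covectors_of_orth_vectors Y hY fun V hV => ?_
  rw [orth_comm]
  refine (forall_orth_iff {V | M.IsVector V} M.dual.neg_mem Y).2 (fun V hV h1 e he => ?_) V hV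
  have hVe : V e ≠ 0 := by intro h; simp [h] at he
  obtain ⟨C, hC, hCe, hC1⟩ := M.dual.exists_conformal_cocircuit hV hVe
  have h2 := (orth_iff _ _).1 (hO C hC)
  obtain ⟨a, ha⟩ := h2.1 ⟨e, by rw [hCe, mul_comm]; exact he⟩
  rcases hC1 a with h | h
  · simp [h] at ha
  · rw [h, mul_comm] at ha
    exact h1 a ha

end OrientedMatroid
end General

/-! ### Closure, independence and rank -/

section Rank

variable {α : Type*}

namespace OrientedMatroid

variable (M : OrientedMatroid α)

/-- `e` lies in the closure of `A`: every covector vanishing on `A` vanishes at `e`. -/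
def InCl (A : Set α) (e : α) : Prop :=
  ∀ X ∈ M.covectors, (∀ a ∈ A, X a = 0) → X e = 0

/-- Elimination of `e` up to the sign of `Y`, off the support of `Y`. -/
theorem elim_off_supp {X Y : SignVec α} (hX : X ∈ M.covectors) (hY : Y ∈ M.covectors) {e : α}
    (hXe : X e ≠ 0) (hYe : Y e ≠ 0) :
    ∃ Z ∈ M.covectors, Z e = 0 ∧ ∀ a, Y a = 0 → Z a = X a := by
  have key : ∀ Y' ∈ M.covectors, X e * Y' e = -1 → (∀ a, Y a = 0 → Y' a = 0) →
      ∃ Z ∈ M.covectors, Z e = 0 ∧ ∀ a, Y a = 0 → Z a = X a := by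
    intro Y' hY' he h0
    obtain ⟨Z, hZ, hZe, hZ1⟩ := M.elim_mul hX hY' he
    refine ⟨Z, hZ, hZe, fun a ha => ?_⟩
    have h1 := hZ1 a (by simp [h0 a ha])
    by_cases hXa : X a = 0
    · rw [h1.2 hXa, h0 a ha, hXa]
    · exact h1.1 hXa
  by_cases h : X e * Y e = -1
  · exact key Y hY h fun _ h => h
  · refine key (-Y) (M.neg_mem Y hY) ?_ fun a h => by simp [h]
    rw [Pi.neg_apply]
    revert h hXe hYe
    generalize X e = x; generalize Y e = y
    revert x y; decide

/-- Covector closure is circuit closure. -/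
theorem exists_circuit_of_inCl {B : Set α} {e : α} (hB : B ⊆ M.ground) (he : e ∈ M.ground)
    (heB : e ∉ B) (h : M.InCl B e) :
    ∃ C, M.IsCircuit C ∧ C e ≠ 0 ∧ supp C ⊆ insert e B := by
  classical
  -- The unit vector at `e` is orthogonal to the covectors vanishing on `B`, hence extends.
  let T : SignVec α := fun a => if a = e then 1 else 0
  have hT : ∀ a, a ≠ e → T a = 0 := fun a ha => by simp [T, ha]
  obtain ⟨V, hV, hVT⟩ := M.exists_vector_extension hB T (by
      intro a ha
      by_cases hae : a = e
      · exact hae ▸ he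
      · exact absurd (hT a hae) ha) (by
      intro X hX h0
      have : ∀ a, T a * X a = 0 := by
        intro a
        by_cases hae : a = e
        · subst hae; simp [h X hX h0]
        · simp [hT a hae]
      simp [orth_iff, this])
  have hVe : V e ≠ 0 := by rw [hVT e heB]; simp [T]
  obtain ⟨C, hC, hCe, hC1⟩ := M.dual.exists_conformal_cocircuit hV hVe
  refine ⟨C, hC, hCe ▸ hVe, fun a ha => ?_⟩
  by_contra hn
  have h1 : a ∉ B := fun h => hn (Or.inr h)
  have h2 : a ≠ e := fun h => hn (Or.inl h)
  rcases hC1 a with h | h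
  · exact ha h
  · exact ha (by rw [h, hVT a h1, hT a h2])

theorem indep_iff (A : Set α) :
    M.Indep A ↔ A ⊆ M.ground ∧ ∀ e ∈ A, ¬ M.InCl (A \ {e}) e := by
  constructor
  · rintro ⟨h1, h2⟩
    refine ⟨h1, fun e he hcl => ?_⟩
    obtain ⟨C, hC, -, hCs⟩ := M.exists_circuit_of_inCl (fun a ha => h1 ha.1) (h1 he)
      (fun h => h.2 rfl) hcl
    refine h2 C hC (hCs.trans ?_)
    rintro a (rfl | ha)
    exacts [he, ha.1]
  · rintro ⟨h1, h2⟩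
    refine ⟨h1, fun C hC hCA => ?_⟩
    obtain ⟨e, he⟩ : ∃ e, C e ≠ 0 := by
      by_contra h
      push Not at h
      exact hC.2.1 (funext h)
    refine h2 e (hCA he) fun X hX h0 => ?_
    by_contra hXe
    have hz : ∀ a, a ≠ e → C a * X a = 0 := by
      intro a ha
      by_cases hCa : C a = 0
      · simp [hCa]
      · simp [h0 a ⟨hCA hCa, ha⟩]
    have ho := (orth_iff _ _).1 (hC.1.2 X hX)
    have hp : C e * X e = 1 ∨ C e * X e = -1 := by
      revert he hXe
      generalize C e = c; generalize X e = x
      revert c x; decide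
    rcases hp with hp | hp
    · obtain ⟨a, ha⟩ := ho.1 ⟨e, hp⟩
      by_cases hae : a = e
      · rw [hae, hp] at ha; exact absurd ha (by decide)
      · rw [hz a hae] at ha; exact absurd ha (by decide)
    · obtain ⟨a, ha⟩ := ho.2 ⟨e, hp⟩
      by_cases hae : a = e
      · rw [hae, hp] at ha; exact absurd ha (by decide)
      · rw [hz a hae] at ha; exact absurd ha (by decide)

theorem InCl.mono {M : OrientedMatroid α} {A B : Set α} {e : α} (h : M.InCl A e)
    (hAB : A ⊆ B) : M.InCl B e :=
  fun X hX h0 => h X hX fun a ha => h0 a (hAB ha)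

theorem InCl.trans {M : OrientedMatroid α} {A B : Set α} {e : α} (h : M.InCl A e)
    (hAB : ∀ a ∈ A, M.InCl B a) : M.InCl B e :=
  fun X hX h0 => h X hX fun a ha => hAB a ha X hX h0

theorem inCl_of_mem {A : Set α} {e : α} (h : e ∈ A) : M.InCl A e :=
  fun _ _ h0 => h0 e h

/-- The exchange property of the closure. -/
theorem inCl_exchange {A : Set α} {a b : α} (h1 : M.InCl (insert a A) b)
    (h2 : ¬ M.InCl A b) : M.InCl (insert b A) a := by
  intro X hX h0
  by_contra hXa
  unfold InCl at h2
  push Not at h2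
  obtain ⟨Y, hY, hY0, hYb⟩ := h2
  have hYa : Y a ≠ 0 := fun h => hYb (h1 Y hY (by
    rintro c (rfl | hc)
    exacts [h, hY0 c hc]))
  obtain ⟨Z, hZ, hZa, hZ1⟩ := M.elim_off_supp hY hX hYa hXa
  refine hYb ((hZ1 b (h0 b (Or.inl rfl))).symm.trans (h1 Z hZ ?_))
  rintro c (rfl | hc)
  · exact hZa
  · rw [hZ1 c (h0 c (Or.inr hc)), hY0 c hc]

theorem Indep.insert_of_not_inCl {M : OrientedMatroid α} {I : Set α} {b : α} (hI : M.Indep I)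
    (hb : b ∈ M.ground) (h : ¬ M.InCl I b) : M.Indep (insert b I) := by
  rw [indep_iff] at hI ⊢
  have hbI : b ∉ I := fun hb => h (M.inCl_of_mem hb)
  refine ⟨Set.insert_subset hb hI.1, ?_⟩
  rintro a (rfl | ha) hcl
  · refine h (hcl.mono ?_)
    rintro c ⟨rfl | hc, hne⟩
    exacts [absurd rfl hne, hc]
  · have hcl' : M.InCl (insert b (I \ {a})) a := hcl.mono (by
      rintro c ⟨rfl | hc, hne⟩
      exacts [Or.inl rfl, Or.inr ⟨hc, hne⟩])
    refine h ((M.inCl_exchange hcl' (hI.2 a ha)).mono ?_)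
    rintro c (rfl | hc)
    exacts [ha, hc.1]

theorem Indep.subset {M : OrientedMatroid α} {I J : Set α} (hI : M.Indep I) (h : J ⊆ I) :
    M.Indep J :=
  ⟨h.trans hI.1, fun X hX hs => hI.2 X hX (hs.trans h)⟩

/-- Steinitz: an independent set inside the closure of `B` has at most `|B|` elements. -/
theorem Indep.ncard_le {M : OrientedMatroid α} {I B : Set α} (hI : M.Indep I)
    (hB : B ⊆ M.ground) (hIB : ∀ a ∈ I, M.InCl B a) : I.ncard ≤ B.ncard := by
  have hBf := M.ground_finite.subset hB
  obtain ⟨k, hk⟩ : ∃ k, (I \ B).ncard = k := ⟨_, rfl⟩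
  induction k using Nat.strong_induction_on generalizing I with
  | _ k ih =>
  have hIf := M.ground_finite.subset hI.1
  by_cases hsub : I ⊆ B
  · exact Set.ncard_le_ncard hsub hBf
  rw [Set.not_subset] at hsub
  obtain ⟨x, hxI, hxB⟩ := hsub
  have hx := ((M.indep_iff I).1 hI).2 x hxI
  obtain ⟨b, hbB, hb⟩ : ∃ b ∈ B, ¬ M.InCl (I \ {x}) b := by
    by_contra h
    push Not at h
    exact hx ((hIB x hxI).trans h)
  have hbI : b ∉ I \ {x} := fun h => hb (M.inCl_of_mem h)
  have hIf' : (I \ {x}).Finite := hIf.subset Set.sdiff_subset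
  have hcard : (insert b (I \ {x})).ncard = I.ncard := by
    rw [Set.ncard_insert_of_notMem hbI hIf', Set.ncard_sdiff_singleton_add_one hxI hIf]
  rw [← hcard]
  refine ih _ ?_ ((hI.subset Set.sdiff_subset).insert_of_not_inCl (hB hbB) hb) ?_ rfl
  · rw [← hk]
    refine Set.ncard_lt_ncard ⟨?_, fun h => ?_⟩ (hIf.subset Set.sdiff_subset)
    · rintro c ⟨rfl | hc, hcB⟩
      exacts [absurd hbB hcB, ⟨hc.1, hcB⟩]
    · rcases (h ⟨hxI, hxB⟩).1 with h | h
      · exact hxB (h ▸ hbB)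
      · exact h.2 rfl
  · rintro a (rfl | ha)
    · exact M.inCl_of_mem hbB
    · exact hIB a ha.1

theorem rk_eq_of_basis {I A : Set α} (hI : M.Indep I) (hIA : I ⊆ A)
    (h : ∀ a ∈ A, M.InCl I a) : M.rk A = I.ncard := by
  refine IsGreatest.csSup_eq ⟨⟨I, hIA, hI, rfl⟩, ?_⟩
  rintro _ ⟨J, hJA, hJ, rfl⟩
  exact hJ.ncard_le hI.1 fun a ha => h a (hJA ha)

theorem exists_basis {A : Set α} (hA : A ⊆ M.ground) :
    ∃ I ⊆ A, M.Indep I ∧ ∀ a ∈ A, M.InCl I a := by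
  have hfin := M.ground_finite.subset hA
  induction A, hfin using Set.Finite.induction_on with
  | empty => exact ⟨∅, le_rfl, (M.indep_iff _).2 ⟨by simp, by simp⟩, by simp⟩
  | @insert b A hb hfin ih =>
    obtain ⟨I, hIA, hI, hcl⟩ := ih (fun x hx => hA (Or.inr hx))
    by_cases h : M.InCl I b
    · refine ⟨I, fun x hx => Or.inr (hIA hx), hI, ?_⟩
      rintro a (rfl | ha)
      exacts [h, hcl a ha]
    · refine ⟨insert b I, Set.insert_subset_insert hIA,
        hI.insert_of_not_inCl (hA (Or.inl rfl)) h, ?_⟩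
      rintro a (rfl | ha)
      · exact M.inCl_of_mem (Or.inl rfl)
      · exact (hcl a ha).mono fun x hx => Or.inr hx

theorem Indep.ncard_le_rk {M : OrientedMatroid α} {I A : Set α} (hI : M.Indep I) (hIA : I ⊆ A)
    (hA : A ⊆ M.ground) : I.ncard ≤ M.rk A := by
  obtain ⟨J, hJA, hJ, hcl⟩ := M.exists_basis hA
  rw [M.rk_eq_of_basis hJ hJA hcl]
  exact hI.ncard_le hJ.1 fun a ha => hcl a (hIA ha)

/-- One step up in the lattice of flats raises the rank by one. -/
theorem rk_eq_succ {F F' : Set α} {e : α} (hF' : F' ⊆ M.ground) (hFF' : F ⊆ F') (he : e ∈ F')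
    (h1 : ¬ M.InCl F e) (h2 : ∀ a ∈ F', M.InCl (insert e F) a) : M.rk F' = M.rk F + 1 := by
  obtain ⟨I, hIF, hI, hcl⟩ := M.exists_basis (hFF'.trans hF')
  have heI : ¬ M.InCl I e := fun h => h1 (h.mono hIF)
  rw [M.rk_eq_of_basis hI hIF hcl, ← Set.ncard_insert_of_notMem
    (fun h => heI (M.inCl_of_mem h)) (M.ground_finite.subset hI.1)]
  refine M.rk_eq_of_basis (hI.insert_of_not_inCl (hF' he) heI)
    (Set.insert_subset he (hIF.trans hFF')) fun a ha => (h2 a ha).trans ?_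
  rintro b (rfl | hb)
  · exact M.inCl_of_mem (Or.inl rfl)
  · exact (hcl b hb).mono fun x hx => Or.inr hx

theorem IsCircuit.indep_sdiff {M : OrientedMatroid α} {C : SignVec α} (hC : M.IsCircuit C)
    {e : α} (he : C e ≠ 0) : M.Indep (supp C \ {e}) := by
  refine ⟨fun a ha => hC.1.1 ha.1, fun X hX hs => ?_⟩
  have := hC.2.2 X hX.1 hX.2.1 (hs.trans Set.sdiff_subset)
  have hmem : e ∈ supp X := by rw [this]; exact he
  exact (hs hmem).2 rfl

/-! ### Deletions and contractions specified by circuits -/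

theorem covectors_subset_of_circuits {N N' : OrientedMatroid α} (hg : N.ground = N'.ground)
    (hc : ∀ X, N'.IsCircuit X → N.IsCircuit X) : N.covectors ⊆ N'.covectors := by
  intro Y hY
  refine N'.mem_covectors_of_orth_circuits Y (hg ▸ N.supp_subset Y hY) fun C hC => ?_
  exact (hc C hC).1.2 Y hY

theorem del_isCircuit_iff (A : Set α) (X : SignVec α) :
    (M.del A).IsCircuit X ↔ M.IsCircuit X ∧ ∀ e ∈ A, X e = 0 := by
  constructor
  · rintro ⟨h1, h2, h3⟩
    rw [del_isVector_iff] at h1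
    refine ⟨⟨h1.1, h2, fun Y hY hY0 hs => h3 Y ?_ hY0 hs⟩, h1.2⟩
    rw [del_isVector_iff]
    refine ⟨hY, fun e he => ?_⟩
    by_contra h
    exact hs h (h1.2 e he)
  · rintro ⟨⟨h1, h2, h3⟩, hA⟩
    refine ⟨(M.del_isVector_iff A X).2 ⟨h1, hA⟩, h2, fun Y hY hY0 hs => h3 Y ?_ hY0 hs⟩
    exact ((M.del_isVector_iff A Y).1 hY).1

/-- The covectors of a deletion are the restricted covectors. -/
theorem mem_deletion_iff {M M' : OrientedMatroid α} {A : Set α} (h : IsDeletion M A M')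
    (Y : SignVec α) : Y ∈ M'.covectors ↔ ∃ X ∈ M.covectors, restrictAway A X = Y := by
  have hc : ∀ X, M'.IsCircuit X ↔ (M.del A).IsCircuit X := fun X => by
    rw [h.2, del_isCircuit_iff]
  constructor
  · intro hY
    exact covectors_subset_of_circuits (N := M') (N' := M.del A) h.1 (fun X => (hc X).2) hY
  · intro hY
    exact covectors_subset_of_circuits (N := M.del A) (N' := M') h.1.symm (fun X => (hc X).1) hY

/-- Covectors vanishing on `A` are covectors of the contraction by `A`. -/
theorem mem_contraction {M M' : OrientedMatroid α} {A : Set α} (h : IsContraction M A M')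
    {Y : SignVec α} (hY : Y ∈ M.covectors) (hA : ∀ e ∈ A, Y e = 0) : Y ∈ M'.covectors := by
  refine M'.mem_covectors_of_orth_circuits Y (fun e he => ?_) fun C hC => ?_
  · rw [h.1]
    exact ⟨M.supp_subset Y hY he, fun heA => he (hA e heA)⟩
  · obtain ⟨D, hD, rfl⟩ := ((h.2 C).1 hC).2.1
    have h1 := hD.1.2 Y hY
    rw [orth_iff] at h1 ⊢
    have : ∀ e, restrictAway A D e * Y e = D e * Y e := by
      intro e
      by_cases he : e ∈ A
      · simp [hA e he]
      · rw [restrictAway_notMem he]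
    simpa only [this] using h1

/-- Conformal decomposition in the minor of `M` obtained by contracting `g` and restricting
to `A`, expressed with covectors of `M`. -/
theorem exists_minimal_on (A : Set α) (g : α) {Z : SignVec α} (hZ : Z ∈ M.covectors)
    (hZg : Z g = 0) {e : α} (heA : e ∈ A) (he : Z e ≠ 0) :
    ∃ W ∈ M.covectors, W g = 0 ∧ W e = Z e ∧ (∀ a ∈ A, W a = 0 ∨ W a = Z a) ∧
      ∀ X ∈ M.covectors, X g = 0 → (∃ a ∈ A, X a ≠ 0) → (∀ a ∈ A, W a = 0 → X a = 0) →
        ∀ a ∈ A, X a = 0 → W a = 0 := by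
  have hmem : ∀ a ∈ A, a ∉ Aᶜ := fun a ha h => h ha
  have hN : ∀ X ∈ M.covectors, X g = 0 →
      restrictAway Aᶜ X ∈ ((M.con {g}).del Aᶜ).covectors := by
    intro X hX hXg
    exact ⟨X, ⟨hX, by rintro _ rfl; exact hXg⟩, rfl⟩
  obtain ⟨C, ⟨⟨W, ⟨hW, hWg⟩, rfl⟩, -, hmin⟩, hCe, hC1⟩ :=
    ((M.con {g}).del Aᶜ).exists_conformal_cocircuit (hN Z hZ hZg)
      (e := e) (by rwa [restrictAway_notMem (hmem e heA)])
  rw [restrictAway_notMem (hmem e heA), restrictAway_notMem (hmem e heA)] at hCe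
  refine ⟨W, hW, hWg g rfl, hCe, fun a ha => ?_, fun X hX hXg hX0 hs a ha hXa => ?_⟩
  · have := hC1 a
    rwa [restrictAway_notMem (hmem a ha), restrictAway_notMem (hmem a ha)] at this
  · obtain ⟨b, hb, hXb⟩ := hX0
    have hsupp := hmin _ (hN X hX hXg) (fun h0 => hXb (by
      rw [← restrictAway_notMem (hmem b hb) (X := X), h0]; rfl)) (by
      intro c hc
      by_cases hcA : c ∈ A
      · have hc' : restrictAway Aᶜ X c ≠ 0 := hc
        rw [restrictAway_notMem (hmem c hcA)] at hc'
        change restrictAway Aᶜ W c ≠ 0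
        rw [restrictAway_notMem (hmem c hcA)]
        exact fun h => hc' (hs c hcA h)
      · exact absurd (restrictAway_mem hcA) hc)
    by_contra hWa
    have : a ∈ supp (restrictAway Aᶜ W) := by
      change restrictAway Aᶜ W a ≠ 0
      rwa [restrictAway_notMem (hmem a ha)]
    rw [← hsupp] at this
    exact this (by rw [restrictAway_notMem (hmem a ha), hXa])

end OrientedMatroid
end Rank

/-! ### Nodes and edge directions of a program -/

section Program

variable {M Mf : OrientedMatroid ℕ} {n r : ℕ}

/-- `P` is a covector of `M` lifting the nonnegative cocircuit of `M ∖ f` that defines the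
node `v`, normalised to be `+` at `g`; the last clause records its minimality. -/
def IsLift (M : OrientedMatroid ℕ) (n : ℕ) (v : Set ℕ) (P : SignVec ℕ) : Prop :=
  P ∈ M.covectors ∧ P (n + 1) = 1 ∧ (∀ e < n, P e = 0 ∨ P e = 1) ∧
    (∀ e, e ∈ v ↔ e < n ∧ P e = 0) ∧
    ∀ X ∈ M.covectors, (∀ e ∈ v, X e = 0) → X (n + 1) = 0 → ∀ e, e ≠ n → X e = 0

/-- `Z` is a covector of `M / g` in the cone of the node `v`: it is nonnegative on `v`. -/
def IsDir (M : OrientedMatroid ℕ) (n : ℕ) (v : Set ℕ) (Z : SignVec ℕ) : Prop :=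
  Z ∈ M.covectors ∧ Z (n + 1) = 0 ∧ ∀ e ∈ v, Z e = 0 ∨ Z e = 1

/-- `W` is an edge direction at the node `v`: a covector of `M / g` that is nonnegative,
nonzero and of minimal support on `v`. -/
def IsEdge (M : OrientedMatroid ℕ) (n : ℕ) (v : Set ℕ) (W : SignVec ℕ) : Prop :=
  IsDir M n v W ∧ (∃ e ∈ v, W e = 1) ∧
    ∀ X ∈ M.covectors, X (n + 1) = 0 → (∃ e ∈ v, X e ≠ 0) → (∀ e ∈ v, W e = 0 → X e = 0) →
      ∀ e ∈ v, X e = 0 → W e = 0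

/-- `f` is not a coloop: no nonzero covector is supported on `{f}`. -/
def NotColoop (M : OrientedMatroid ℕ) (n : ℕ) : Prop :=
  ∀ X ∈ M.covectors, (∀ e, e ≠ n → X e = 0) → X = 0

theorem IsProgram.mem_ground (hP : IsProgram M Mf n r) (e : ℕ) :
    e ∈ M.ground ↔ e < n ∨ e = n ∨ e = n + 1 := by
  rw [hP.1]; rfl

theorem IsProgram.exists_lift (hP : IsProgram M Mf n r) {v : Set ℕ} (hv : IsNode Mf n v) :
    ∃ P, IsLift M n v P := by
  obtain ⟨Y, hY, hYn, rfl⟩ := hv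
  obtain ⟨P, hPM, hPY⟩ := (mem_deletion_iff hP.2.2.1 Y).1 hY.1
  have hval : ∀ e, e ≠ n → P e = Y e := fun e he => by
    rw [← hPY, restrictAway_notMem (by simpa using he)]
  refine ⟨P, hPM, ?_, fun e he => ?_, fun e => ?_, fun X hX h0 hg e he => ?_⟩
  · rw [hval _ (by omega)]
    exact (hYn (n + 1)).resolve_right (hP.2.2.2.1 Y hY hYn)
  · rw [hval _ (by omega)]
    exact (hYn e).symm
  · constructor
    · rintro ⟨h1, h2⟩
      have h1' : e < n := h1
      refine ⟨h1', ?_⟩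
      rw [hval _ (by omega)]
      by_contra h
      exact h2 h
    · rintro ⟨h1, h2⟩
      rw [hval _ (by omega)] at h2
      exact ⟨h1, fun h => h h2⟩
  · by_contra hXe
    have hX' : restrictAway {n} X ∈ Mf.covectors := (mem_deletion_iff hP.2.2.1 _).2 ⟨X, hX, rfl⟩
    have hXe' : restrictAway {n} X e ≠ 0 := by
      rwa [restrictAway_notMem (by simpa using he)]
    have hs := hY.2.2 _ hX' (fun h => hXe' (by rw [h]; rfl)) (by
      intro a ha
      have ha' : restrictAway {n} X a ≠ 0 := ha
      by_cases han : a = n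
      · exact absurd (restrictAway_mem (by simpa using han)) ha'
      rw [restrictAway_notMem (by simpa using han)] at ha'
      rcases (hP.mem_ground a).1 (M.supp_subset X hX ha') with h | h | h
      · by_contra hYa
        exact ha' (h0 a ⟨h, hYa⟩)
      · exact absurd h han
      · exact absurd (h ▸ hg) ha')
    have hmem : n + 1 ∈ supp (restrictAway {n} X) := by
      rw [hs]; exact hP.2.2.2.1 Y hY hYn
    exact hmem (by rw [restrictAway_notMem (by simp), hg])

theorem IsLift.lt {v : Set ℕ} {P : SignVec ℕ} (hv : IsLift M n v P) {e : ℕ} (he : e ∈ v) :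
    e < n := ((hv.2.2.2.1 e).1 he).1

theorem IsLift.eq_zero {v : Set ℕ} {P : SignVec ℕ} (hv : IsLift M n v P) {e : ℕ} (he : e ∈ v) :
    P e = 0 := ((hv.2.2.2.1 e).1 he).2

theorem IsLift.eq_zero_of_notColoop {v : Set ℕ} {P : SignVec ℕ} (hv : IsLift M n v P)
    (hN : NotColoop M n) {X : SignVec ℕ} (hX : X ∈ M.covectors) (h0 : ∀ e ∈ v, X e = 0)
    (hg : X (n + 1) = 0) : X = 0 :=
  hN X hX (hv.2.2.2.2 X hX h0 hg)

/-- The direction from the node `v` to the node `w`. -/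
theorem exists_dir_between {v w : Set ℕ} {P Q : SignVec ℕ} (hv : IsLift M n v P)
    (hw : IsLift M n w Q) :
    ∃ Z ∈ M.covectors, Z (n + 1) = 0 ∧ (∀ e ∈ v, Z e = Q e) ∧ (∀ e ∈ w, Z e = -P e) ∧
      ∀ e < n, P e = 1 → Q e = 0 → Z e = -1 := by
  obtain ⟨Z, hZ, hZg, hZ1⟩ := M.elim_mul hw.1 (M.neg_mem P hv.1) (e := n + 1)
    (by simp [hw.2.1, hv.2.1])
  refine ⟨Z, hZ, hZg, fun e he => ?_, fun e he => ?_, fun e he h1 h2 => ?_⟩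
  · have h := hZ1 e (by simp [hv.eq_zero he])
    by_cases hQ : Q e = 0
    · rw [h.2 hQ, hQ, Pi.neg_apply, hv.eq_zero he]; rfl
    · exact h.1 hQ
  · exact (hZ1 e (by simp [hw.eq_zero he])).2 (hw.eq_zero he)
  · rw [(hZ1 e (by simp [h2])).2 h2, Pi.neg_apply, h1]

/-- Distinct nodes are incomparable. -/
theorem exists_mem_notMem {v w : Set ℕ} {P Q : SignVec ℕ} (hv : IsLift M n v P)
    (hw : IsLift M n w Q) (hne : v ≠ w) : ∃ e ∈ v, e ∉ w := by
  by_contra h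
  push Not at h
  obtain ⟨Z, hZ, hZg, hZv, hZw, -⟩ := exists_dir_between hv hw
  have h0 := hv.2.2.2.2 Z hZ (fun e he => by rw [hZv e he, hw.eq_zero (h e he)]) hZg
  refine hne (Set.Subset.antisymm h fun e he => ?_)
  have h1 := hZw e he
  have h2 := hw.lt he
  rw [h0 e (by omega)] at h1
  exact (hv.2.2.2.1 e).2 ⟨h2, by simpa using h1.symm⟩

/-- If `f` is not a coloop, an edge direction is determined up to sign by its zeros on `v`. -/
theorem IsEdge.unique {v : Set ℕ} {P W X : SignVec ℕ} (hv : IsLift M n v P)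
    (hN : NotColoop M n) (hW : IsEdge M n v W) (hX : X ∈ M.covectors) (hXg : X (n + 1) = 0)
    (h0 : ∀ e ∈ v, W e = 0 → X e = 0) : X = 0 ∨ X = W ∨ X = -W := by
  obtain ⟨⟨hWM, hWg, -⟩, ⟨e, hev, hWe⟩, hmin⟩ := hW
  have key : ∀ Y ∈ M.covectors, Y (n + 1) = 0 → (∀ e ∈ v, W e = 0 → Y e = 0) → Y e = -1 →
      Y = -W := by
    intro Y hY hYg hY0 hYe
    obtain ⟨R, hR, hRe, hR1⟩ := M.elim_mul hWM hY (e := e) (by rw [hWe, hYe]; rfl)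
    have hRg : R (n + 1) = 0 := by rw [(hR1 (n + 1) (by simp [hWg])).2 hWg, hYg]
    have hRz : ∀ a ∈ v, W a = 0 → R a = 0 := fun a ha h => by
      rw [(hR1 a (by simp [h])).2 h, hY0 a ha h]
    have hRv : ∀ a ∈ v, R a = 0 := by
      by_contra h
      push Not at h
      have := hmin R hR hRg h hRz e hev hRe
      rw [hWe] at this
      exact absurd this (by decide)
    have hR0 := hv.eq_zero_of_notColoop hN hR hRv hRg
    funext a
    by_cases hs : W a * Y a = -1
    · rw [Pi.neg_apply, ((mul_eq_neg_one_iff _ _).1 hs).1, neg_neg]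
    · by_cases hWa : W a = 0
      · rw [Pi.neg_apply, hWa, ← (hR1 a hs).2 hWa, hR0]; rfl
      · exact absurd ((hR1 a hs).1 hWa).symm (by rw [hR0]; exact hWa)
  by_cases hXv : ∃ a ∈ v, X a ≠ 0
  · right
    have hXe : X e ≠ 0 := fun h => by
      have := hmin X hX hXg hXv h0 e hev h
      rw [hWe] at this
      exact absurd this (by decide)
    rcases sign_cases (X e) with h | h | h
    · exact absurd h hXe
    · left
      have := key (-X) (M.neg_mem X hX) (by simp [hXg])
        (fun a ha hWa => by simp [h0 a ha hWa]) (by simp [h])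
      exact neg_injective this
    · exact Or.inr (key X hX hXg h0 h)
  · push Not at hXv
    exact Or.inl (hv.eq_zero_of_notColoop hN hX hXv hXg)

/-- If `f` is not a coloop, the zero set on `v` of an edge direction has rank `r - 2`, and rank
`r - 1` together with `g`. -/
theorem IsEdge.rk {v : Set ℕ} {P W : SignVec ℕ} (hP : IsProgram M Mf n r)
    (hv : IsLift M n v P) (hN : NotColoop M n) (hW : IsEdge M n v W) :
    M.rk {a | a ∈ v ∧ W a = 0} + 2 = r ∧
      M.rk (insert (n + 1) {a | a ∈ v ∧ W a = 0}) + 1 = r := by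
  have huniq := fun X => IsEdge.unique (X := X) hv hN hW
  obtain ⟨⟨hWM, hWg, -⟩, ⟨e, hev, hWe⟩, -⟩ := hW
  have hvg : v ⊆ M.ground := fun a ha => (hP.mem_ground a).2 (Or.inl (hv.lt ha))
  have hgg : n + 1 ∈ M.ground := (hP.mem_ground _).2 (Or.inr (Or.inr rfl))
  have hF : {a | a ∈ v ∧ W a = 0} ⊆ v := fun a ha => ha.1
  have hWe0 : W e ≠ 0 := by rw [hWe]; decide
  -- a covector of `M / g` vanishing at `e` and where `W` does on `v` is zero
  have hzero : ∀ X ∈ M.covectors, X (n + 1) = 0 → X e = 0 →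
      (∀ a ∈ v, W a = 0 → X a = 0) → X = 0 := by
    intro X hX hXg hXe h0
    rcases huniq X hX hXg h0 with h | h | h
    · exact h
    · rw [h] at hXe; exact absurd hXe hWe0
    · rw [h, Pi.neg_apply, hWe] at hXe; exact absurd hXe (by decide)
  have h1 : M.rk v = M.rk {a | a ∈ v ∧ W a = 0} + 1 := by
    refine M.rk_eq_succ hvg hF hev (fun h => hWe0 (h W hWM fun a ha => ha.2)) ?_
    intro a ha X hX h0
    obtain ⟨Q, hQ, hQg, hQX⟩ : ∃ Q ∈ M.covectors, Q (n + 1) = 0 ∧ ∀ a ∈ v, Q a = X a := by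
      by_cases hXg : X (n + 1) = 0
      · exact ⟨X, hX, hXg, fun _ _ => rfl⟩
      · obtain ⟨Q, hQ, hQg, hQX⟩ := M.elim_off_supp hX hv.1 hXg
          (by rw [hv.2.1]; decide)
        exact ⟨Q, hQ, hQg, fun a ha => hQX a (hv.eq_zero ha)⟩
    have := hzero Q hQ hQg (by rw [hQX e hev]; exact h0 e (Or.inl rfl))
      (fun b hb hWb => by rw [hQX b hb]; exact h0 b (Or.inr ⟨hb, hWb⟩))
    rw [← hQX a ha, this]; rfl
  have h2 : M.rk M.ground = M.rk v + 1 := by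
    refine M.rk_eq_succ le_rfl hvg hgg (fun h => ?_) ?_
    · have := h P hv.1 fun a ha => hv.eq_zero ha
      rw [hv.2.1] at this
      exact absurd this (by decide)
    · intro a _ X hX h0
      rw [hv.eq_zero_of_notColoop hN hX (fun b hb => h0 b (Or.inr hb)) (h0 _ (Or.inl rfl))]
      rfl
  have h3 : M.rk M.ground = M.rk (insert (n + 1) {a | a ∈ v ∧ W a = 0}) + 1 := by
    refine M.rk_eq_succ le_rfl (Set.insert_subset hgg (hF.trans hvg)) (hvg hev) (fun h => ?_) ?_
    · refine hWe0 (h W hWM ?_)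
      rintro a (rfl | ha)
      exacts [hWg, ha.2]
    · intro a _ X hX h0
      rw [hzero X hX (h0 _ (Or.inr (Or.inl rfl))) (h0 _ (Or.inl rfl))
        (fun b hb hWb => h0 b (Or.inr (Or.inr ⟨hb, hWb⟩)))]
      rfl
  have hr : M.rk M.ground = r := hP.2.1
  omega

/-- General position of `f`: if `f` is not a coloop, no edge direction vanishes at `f`. -/
theorem IsEdge.apply_f_ne {v : Set ℕ} {P W : SignVec ℕ} (hP : IsProgram M Mf n r)
    (hv : IsLift M n v P) (hN : NotColoop M n) (hW : IsEdge M n v W) : W n ≠ 0 := by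
  intro hWn
  have hrk := (hW.rk hP hv hN).2
  have hnF : n ∉ insert (n + 1) {a | a ∈ v ∧ W a = 0} := by
    rintro (h | h)
    · omega
    · exact absurd (hv.lt h.1) (lt_irrefl n)
  have hFg : insert (n + 1) {a | a ∈ v ∧ W a = 0} ⊆ M.ground := by
    rintro a (rfl | ha)
    · exact (hP.mem_ground _).2 (Or.inr (Or.inr rfl))
    · exact (hP.mem_ground a).2 (Or.inl (hv.lt ha.1))
  -- otherwise `f` lies in a circuit inside a set of rank `r - 1` enlarged by `f`
  obtain ⟨C, hC, hCn, hCs⟩ := M.exists_circuit_of_inCl hFg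
    ((hP.mem_ground n).2 (Or.inr (Or.inl rfl))) hnF (by
      intro X hX h0
      rcases hW.unique hv hN hX (h0 _ (Or.inl rfl)) (fun a ha hWa => h0 a (Or.inr ⟨ha, hWa⟩))
        with h | h | h
      · rw [h]; rfl
      · rw [h, hWn]
      · rw [h, Pi.neg_apply, hWn]; rfl)
  have hcard := hP.2.2.2.2.2 C hC hCn
  have hle := (hC.indep_sdiff hCn).ncard_le_rk (A := insert (n + 1) {a | a ∈ v ∧ W a = 0})
    (fun a ha => (hCs ha.1).resolve_left ha.2) hFg
  have := Set.ncard_sdiff_singleton_add_one (s := supp C) (a := n) hCn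
    (M.ground_finite.subset hC.1.1)
  omega

/-- If `f` is not a coloop, every edge direction at `v` leads to an adjacent node, the arc being
oriented by the sign of the direction at `f`. -/
theorem IsEdge.exists_arc {v : Set ℕ} {P W : SignVec ℕ} (hP : IsProgram M Mf n r)
    (hnode : IsNode Mf n v) (hv : IsLift M n v P) (hN : NotColoop M n) (hW : IsEdge M n v W) :
    (W n = 1 → ∃ u, Arc M Mf n r v u) ∧ (W n = -1 → ∃ u, Arc M Mf n r u v) := by
  have hrk := (hW.rk hP hv hN).1
  have hWu := fun X => IsEdge.unique (X := X) hv hN hW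
  obtain ⟨⟨hWM, hWg, hWv⟩, ⟨e, hev, hWe⟩, -⟩ := hW
  have hen : e < n := hv.lt hev
  have hW0 : W ≠ 0 := fun h => by
    rw [h, Pi.zero_apply] at hWe; exact absurd hWe (by decide)
  -- `P ∘ W` is the edge leaving `v`; a cocircuit below it and nonzero at `e` is its other end
  have hcomp : restrictAway {n} (compose P W) ∈ Mf.covectors :=
    (mem_deletion_iff hP.2.2.1 _).2 ⟨_, M.compose_mem P hv.1 W hWM, rfl⟩
  have hcv : ∀ a, a ≠ n → restrictAway {n} (compose P W) a = compose P W a := fun a ha =>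
    restrictAway_notMem (by simpa using ha)
  have hce : restrictAway {n} (compose P W) e = 1 := by
    rw [hcv e (by omega), compose_of_eq (hv.eq_zero hev), hWe]
  obtain ⟨Y, hY, hYe, hYc⟩ := Mf.exists_conformal_cocircuit hcomp (e := e)
    (by rw [hce]; decide)
  rw [hce] at hYe
  have hcn : ∀ a, restrictAway {n} (compose P W) a = 1 ∨
      restrictAway {n} (compose P W) a = 0 := by
    intro a
    by_cases hag : a ∈ M.ground
    · rcases (hP.mem_ground a).1 hag with h | h | h
      · rw [hcv a (by omega)]
        rcases hv.2.2.1 a h with h' | h'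
        · rw [compose_of_eq h']
          exact (hWv a ((hv.2.2.2.1 a).2 ⟨h, h'⟩)).symm
        · rw [compose_of_ne (by rw [h']; decide)]; exact Or.inl h'
      · exact Or.inr (restrictAway_mem (by simpa using h))
      · rw [hcv a (by omega), compose_of_ne (by rw [h, hv.2.1]; decide), h]
        exact Or.inl hv.2.1
    · right
      refine Mf.eq_zero_of_notMem hcomp fun h => hag ?_
      rw [hP.2.2.1.1] at h
      exact h.1
  have hYn : Nonneg Y := by
    intro a
    rcases hYc a with h | h
    · exact Or.inr h
    · rw [h]; exact hcn a
  have hunode : IsNode Mf n (nset n \ supp Y) := ⟨Y, hY, hYn, rfl⟩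
  obtain ⟨u, hu⟩ : ∃ u, u = nset n \ supp Y := ⟨_, rfl⟩
  rw [← hu] at hunode
  have hue : ∀ a, a ∈ u ↔ a < n ∧ Y a = 0 := by
    intro a
    rw [hu]
    constructor
    · rintro ⟨h1, h2⟩
      exact ⟨h1, by by_contra h; exact h2 h⟩
    · rintro ⟨h1, h2⟩
      exact ⟨h1, fun h => h h2⟩
  obtain ⟨Q, hQ⟩ := hP.exists_lift hunode
  have heu : e ∉ u := fun h => by
    have := ((hue e).1 h).2
    rw [hYe] at this
    exact absurd this (by decide)
  have hne : v ≠ u := fun h => heu (h ▸ hev)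
  -- the direction from `v` to `u` is `W`
  obtain ⟨D, hD, hDg, hDv, hDu, -⟩ := exists_dir_between hv hQ
  have hDe : D e = 1 := by
    rw [hDv e hev]
    exact (hQ.2.2.1 e hen).resolve_left fun h => heu ((hQ.2.2.2.1 e).2 ⟨hen, h⟩)
  have hDW : D = W := by
    have hDz : ∀ a ∈ v, W a = 0 → D a = 0 := by
      intro a ha hWa
      have han := hv.lt ha
      rw [hDv a ha]
      refine hQ.eq_zero ((hue a).2 ⟨han, ?_⟩)
      rcases hYc a with h | h
      · exact h
      · rw [h, hcv a (by omega), compose_of_eq (hv.eq_zero ha), hWa]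
    rcases hWu D hD hDg hDz with h | h | h
    · rw [h, Pi.zero_apply] at hDe; exact absurd hDe (by decide)
    · exact h
    · rw [h, Pi.neg_apply, hWe] at hDe; exact absurd hDe (by decide)
  have hint : v ∩ u = {a | a ∈ v ∧ W a = 0} := by
    ext a
    constructor
    · rintro ⟨h1, h2⟩
      exact ⟨h1, by rw [← hDW, hDv a h1, hQ.eq_zero h2]⟩
    · rintro ⟨h1, h2⟩
      refine ⟨h1, (hQ.2.2.2.1 a).2 ⟨hv.lt h1, ?_⟩⟩
      rw [← hDv a h1, hDW, h2]
  have hrk' : M.rk (v ∩ u) = r - 2 := by rw [hint]; omega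
  have hWvu : ∀ a ∈ v \ u, W a = 1 := by
    rintro a ⟨h1, h2⟩
    refine (hWv a h1).resolve_left fun h => h2 ?_
    have : a ∈ v ∩ u := by rw [hint]; exact ⟨h1, h⟩
    exact this.2
  have hWuv : ∀ a ∈ u \ v, W a = -1 := by
    rintro a ⟨h1, h2⟩
    have han := hQ.lt h1
    rw [← hDW, hDu a h1, (hv.2.2.1 a han).resolve_left
      fun h => h2 ((hv.2.2.2.1 a).2 ⟨han, h⟩)]
  have hWi : ∀ a ∈ v ∩ u, W a = 0 := by
    intro a ha
    rw [hint] at ha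
    exact ha.2
  have hcoc : M.IsCocircuit W := by
    refine ⟨hWM, hW0, fun X hX hX0 hs => ?_⟩
    have hz : ∀ a, W a = 0 → X a = 0 := fun a ha => by
      by_contra h
      exact hs h ha
    rcases hWu X hX (hz _ hWg) (fun a _ => hz a) with h | h | h
    · exact absurd h hX0
    · rw [h]
    · rw [h]; ext a; simp [supp]
  have hcoc' : M.IsCocircuit (-W) := by
    refine ⟨M.neg_mem W hWM, fun h => hW0 (funext fun a => sign_neg_eq_zero _ (congrFun h a)), fun X hX hX0 hs => ?_⟩
    have h1 : supp (-W) = supp W := by ext a; simp [supp]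
    rw [h1] at hs ⊢
    exact hcoc.2.2 X hX hX0 hs
  constructor
  · intro hWn
    refine ⟨u, hnode, hunode, hne, hrk', -W, hcoc', by simp [hWg], fun a ha => ?_,
      fun a ha => ?_, fun a ha => ?_, ?_, fun a ha => ?_⟩
    · simp [hWuv a ha]
    · simp [hWvu a ha]
    · simp [hWi a ha]
    · simp [hWn]
    · simp [hWn, hWvu a ha]
  · intro hWn
    refine ⟨u, hunode, hnode, hne.symm, by rw [Set.inter_comm]; exact hrk', W, hcoc, hWg,
      hWvu, hWuv, fun a ha => hWi a ⟨ha.2, ha.1⟩, by rw [hWn]; decide, fun a ha => ?_⟩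
    rw [hWn, hWuv a ha]

/-- If `f` is not a coloop, a direction in the cone of `v` that is nonzero on `v` and whose sign at
`f` is `0` or `s` forces an edge direction at `v` with sign `s` at `f`. -/
theorem exists_edge_of_dir {v : Set ℕ} {P Z : SignVec ℕ} (hP : IsProgram M Mf n r)
    (hv : IsLift M n v P) (hN : NotColoop M n) (hZ : IsDir M n v Z) (hZ0 : ∃ e ∈ v, Z e ≠ 0)
    {s : SignType} (hs : s ≠ 0) (hZs : Z n = 0 ∨ Z n = s) :
    ∃ W, IsEdge M n v W ∧ W n = s := by
  have conf : ∀ {W Z : SignVec ℕ} {a : ℕ}, (W a = 0 ∨ W a = Z a) → (Z a = 0 ∨ Z a = 1) →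
      (W a = 0 ∨ W a = 1) := by
    rintro W Z a (h | h) h'
    · exact Or.inl h
    · rwa [h]
  -- If the sign at `f` is already `s`, decompose through `f` on `v ∪ {f}`.
  have main : ∀ Z, IsDir M n v Z → Z n = s → ∃ W, IsEdge M n v W ∧ W n = s := by
    intro Z hZ hZn
    obtain ⟨W, hW, hWg, hWn, hWc, hWm⟩ := M.exists_minimal_on (insert n v) (n + 1) hZ.1 hZ.2.1
      (e := n) (Or.inl rfl) (by rw [hZn]; exact hs)
    rw [hZn] at hWn
    have hdir : IsDir M n v W :=
      ⟨hW, hWg, fun e he => conf (hWc e (Or.inr he)) (hZ.2.2 e he)⟩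
    refine ⟨W, ⟨hdir, ?_, fun X hX hXg hX0 hz e he hXe => ?_⟩, hWn⟩
    · by_contra h
      push Not at h
      have h0 := hv.eq_zero_of_notColoop hN hW
        (fun e he => (hdir.2.2 e he).resolve_right (h e he)) hWg
      rw [h0] at hWn
      exact hs hWn.symm
    · obtain ⟨b, hb, hXb⟩ := hX0
      refine hWm X hX hXg ⟨b, Or.inr hb, hXb⟩ ?_ e (Or.inr he) hXe
      rintro a (rfl | ha) hWa
      · exact absurd (hWn.symm.trans hWa) hs
      · exact hz a ha hWa
  rcases hZs with hZn | hZn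
  · -- If `Z` vanishes at `f`, perturb it by `±` an edge direction below it.
    obtain ⟨e, he, hZe⟩ := hZ0
    obtain ⟨W, hW, hWg, hWe, hWc, hWm⟩ := M.exists_minimal_on v (n + 1) hZ.1 hZ.2.1 he hZe
    have hdir : IsDir M n v W := ⟨hW, hWg, fun e he => conf (hWc e he) (hZ.2.2 e he)⟩
    have hWedge : IsEdge M n v W :=
      ⟨hdir, ⟨e, he, (hdir.2.2 e he).resolve_left (by rw [hWe]; exact hZe)⟩, hWm⟩
    have hWn := hWedge.apply_f_ne hP hv hN
    by_cases hWs : W n = s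
    · exact ⟨W, hWedge, hWs⟩
    · refine main (compose Z (-W))
        ⟨M.compose_mem Z hZ.1 _ (M.neg_mem W hW), ?_, fun a ha => ?_⟩ ?_
      · rw [compose_of_eq hZ.2.1, Pi.neg_apply, hWg]; rfl
      · by_cases hZa : Z a = 0
        · left
          rw [compose_of_eq hZa, Pi.neg_apply]
          rcases hWc a ha with h | h
          · rw [h]; rfl
          · rw [h, hZa]; rfl
        · rw [compose_of_ne hZa]; exact hZ.2.2 a ha
      · rw [compose_of_eq hZn, Pi.neg_apply]
        exact sign_neg_eq_of_ne _ _ hs hWn hWs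
  · exact main Z hZ hZn

/-- If `f` is not a coloop, two nodes without edge directions of sign `s` at `f` coincide. This
gives uniqueness of both the source and the sink. -/
theorem eq_of_no_edge {v w : Set ℕ} {P Q : SignVec ℕ} (hP : IsProgram M Mf n r)
    (hv : IsLift M n v P) (hw : IsLift M n w Q) (hN : NotColoop M n)
    {s : SignType} (hs : s ≠ 0) (h1 : ∀ W, IsEdge M n v W → W n ≠ s)
    (h2 : ∀ W, IsEdge M n w W → W n ≠ s) : v = w := by
  by_contra hne
  obtain ⟨Z, hZ, hZg, hZv, hZw, -⟩ := exists_dir_between hv hw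
  have hcase : (Z n = 0 ∨ Z n = s) ∨ -Z n = s := sign_split _ _ hs
  rcases hcase with h | h
  · obtain ⟨e, he, hew⟩ := exists_mem_notMem hv hw hne
    obtain ⟨W, hW, hWs⟩ := exists_edge_of_dir hP hv hN (Z := Z)
      ⟨hZ, hZg, fun a ha => by rw [hZv a ha]; exact hw.2.2.1 a (hv.lt ha)⟩
      ⟨e, he, fun h => hew ((hw.2.2.2.1 e).2 ⟨hv.lt he, by rw [← hZv e he, h]⟩)⟩ hs h
    exact h1 W hW hWs
  · obtain ⟨e, he, hev⟩ := exists_mem_notMem hw hv (Ne.symm hne)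
    obtain ⟨W, hW, hWs⟩ := exists_edge_of_dir hP hw hN (Z := -Z)
      ⟨M.neg_mem Z hZ, by simp [hZg], fun a ha => by
        rw [Pi.neg_apply, hZw a ha, neg_neg]; exact hv.2.2.1 a (hw.lt ha)⟩
      ⟨e, he, fun h => hev ((hv.2.2.2.1 e).2 ⟨hw.lt he, by
        rw [Pi.neg_apply, hZw e he, neg_neg] at h; exact h⟩)⟩ hs (Or.inr h)
    exact h2 W hW hWs

/-- At a node other than the source and the sink, the cone contains directions with both signs
at `f`. (If `f` is a coloop, the covectors supported on `{f}` serve.) -/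
theorem exists_dir_of_ne {src snk v : Set ℕ} (hP : IsProgram M Mf n r)
    (hsrc : IsSource M Mf n r src) (hsnk : IsSink M Mf n r snk) (hv : IsNode Mf n v)
    (h1 : v ≠ src) (h2 : v ≠ snk) {s : SignType} (hs : s ≠ 0) :
    ∃ Z, IsDir M n v Z ∧ Z n = s := by
  obtain ⟨P, hvP⟩ := hP.exists_lift hv
  by_cases hN : NotColoop M n
  · by_contra hno
    have hvno : ∀ W, IsEdge M n v W → W n ≠ s := fun W hW h => hno ⟨W, hW.1, h⟩
    rcases sign_cases s with rfl | rfl | rfl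
    · exact hs rfl
    · obtain ⟨Q, hQ⟩ := hP.exists_lift hsnk.1
      refine h2 (eq_of_no_edge hP hvP hQ hN hs hvno fun W hW h => ?_)
      obtain ⟨u, hu⟩ := (hW.exists_arc hP hsnk.1 hQ hN).1 h
      exact hsnk.2 u hu
    · obtain ⟨Q, hQ⟩ := hP.exists_lift hsrc.1
      refine h1 (eq_of_no_edge hP hvP hQ hN hs hvno fun W hW h => ?_)
      obtain ⟨u, hu⟩ := (hW.exists_arc hP hsrc.1 hQ hN).2 h
      exact hsrc.2 u hu
  · unfold NotColoop at hN
    push Not at hN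
    obtain ⟨X, hX, hX0, hne⟩ := hN
    have hXn : X n ≠ 0 := fun h => hne (funext fun a => by
      by_cases ha : a = n
      · rw [ha, h]; rfl
      · exact hX0 a ha)
    have hz : ∀ a ∈ v, X a = 0 := fun a ha => hX0 a (hvP.lt ha).ne
    have hg : X (n + 1) = 0 := hX0 _ (by omega)
    by_cases h : X n = s
    · exact ⟨X, ⟨hX, hg, fun a ha => Or.inl (hz a ha)⟩, h⟩
    · refine ⟨-X, ⟨M.neg_mem X hX, by simp [hg], fun a ha => Or.inl (by simp [hz a ha])⟩, ?_⟩
      rw [Pi.neg_apply]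
      revert h hXn hs
      generalize X n = x
      revert x s; decide

end Program

/-- Finitely many covectors that are nonnegative on `A` compose to one that is `+` wherever one
of them is. -/
theorem exists_covector_pos {α : Type*} (N : OrientedMatroid α) {A B : Set α} (hA : A.Finite)
    (hAB : A ⊆ B)
    (h : ∀ e ∈ A, ∃ Y ∈ N.covectors, Y e = 1 ∧ ∀ a ∈ B, Y a = 1 ∨ Y a = 0) :
    ∃ Y ∈ N.covectors, (∀ e ∈ A, Y e = 1) ∧ ∀ a ∈ B, Y a = 1 ∨ Y a = 0 := by
  induction A, hA using Set.Finite.induction_on with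
  | empty => exact ⟨0, N.zero_mem, by simp, fun _ _ => Or.inr rfl⟩
  | @insert b A hb hfin ih =>
    obtain ⟨Y, hY, hY1, hYB⟩ := ih (fun x hx => hAB (Or.inr hx)) (fun e he => h e (Or.inr he))
    obtain ⟨X, hX, hX1, hXB⟩ := h b (Or.inl rfl)
    have hval : ∀ a ∈ B, (X a = 1 → compose X Y a = 1) ∧ (Y a = 1 → compose X Y a = 1) ∧
        (compose X Y a = 1 ∨ compose X Y a = 0) := by
      intro a ha
      rcases hXB a ha with h | h
      · simp [compose, h]
      · have := hYB a ha
        simp [compose, h, this]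
    refine ⟨compose X Y, N.compose_mem X hX Y hY, ?_, fun a ha => (hval a ha).2.2⟩
    rintro e (rfl | he)
    · exact (hval e (hAB (Or.inl rfl))).1 hX1
    · exact (hval e (hAB (Or.inr he))).2.1 (hY1 e he)

/-- Let `M` be an oriented matroid program of rank `r` on
`[n] ∪ {f, g}` (`f = n`, `g = n + 1`, `Mf = M ∖ f`, `Mfg = M / {f, g}`), and
let `vt` be a node of `K_f` that is neither the source nor the sink.  Then
for every `e ∈ vt` there is a cocircuit `Y` of `M / {f, g}` with `Y e = +`
that is nonnegative on `vt`; consequently (composing such cocircuits) there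
is a covector of `M / {f, g}` that is `+` on every element of `vt`. -/
theorem cocircuits_positive_on_node (M Mf Mfg : OrientedMatroid ℕ) (n r : ℕ)
    (src snk vt : Set ℕ)
    (hProg : IsProgram M Mf n r)
    (hMfg : IsContraction M {n, n + 1} Mfg)
    (hsrc : IsSource M Mf n r src)
    (hsnk : IsSink M Mf n r snk)
    (hvt : IsNode Mf n vt) (hvt1 : vt ≠ src) (hvt2 : vt ≠ snk) :
    (∀ e ∈ vt, ∃ Y : SignVec ℕ, Mfg.IsCocircuit Y ∧ Y e = 1 ∧
      ∀ e' ∈ vt, Y e' = 1 ∨ Y e' = 0) ∧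
    (∃ Y ∈ Mfg.covectors, ∀ e ∈ vt, Y e = 1) := by
  have hcoc : ∀ e ∈ vt, ∃ Y : SignVec ℕ, Mfg.IsCocircuit Y ∧ Y e = 1 ∧
      ∀ e' ∈ vt, Y e' = 1 ∨ Y e' = 0 := by
    intro e he
    obtain ⟨P, hP⟩ := hProg.exists_lift hvt
    have hen := hP.lt he
    -- some node `w` avoids `e`; the direction from `vt` to `w` is `+` at `e`
    obtain ⟨Y, hY, hYn, hYe⟩ := hProg.2.2.2.2.1 e hen
    obtain ⟨Q, hQ⟩ := hProg.exists_lift (v := nset n \ supp Y) ⟨Y, hY, hYn, rfl⟩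
    obtain ⟨Z, hZ, hZg, hZv, -⟩ := exists_dir_between hP hQ
    have hQe : Q e = 1 := (hQ.2.2.1 e hen).resolve_left fun h =>
      ((hQ.2.2.2.1 e).2 ⟨hen, h⟩).2 (show Y e ≠ 0 by rw [hYe]; decide)
    have hZe : Z e = 1 := (hZv e he).trans hQe
    have hZn : ∀ a ∈ vt, Z a = 0 ∨ Z a = 1 := fun a ha => by
      rw [hZv a ha]; exact hQ.2.2.1 a (hP.lt ha)
    -- make it vanish at `f`, by eliminating against a direction of the opposite sign at `f`
    obtain ⟨R, hR, hRg, hRf, hRe, hRn⟩ : ∃ R ∈ M.covectors, R (n + 1) = 0 ∧ R n = 0 ∧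
        R e = 1 ∧ ∀ a ∈ vt, R a = 1 ∨ R a = 0 := by
      by_cases hZf : Z n = 0
      · exact ⟨Z, hZ, hZg, hZf, hZe, fun a ha => (hZn a ha).symm⟩
      · obtain ⟨X, ⟨hX, hXg, hXn⟩, hXf⟩ := exists_dir_of_ne hProg hsrc hsnk hvt hvt1 hvt2
          (s := -Z n) (fun h => hZf (sign_neg_eq_zero _ h))
        obtain ⟨R, hR, hRf, hR1⟩ := M.elim_mul hZ hX (e := n) (by
          rw [hXf]
          revert hZf
          generalize Z n = z
          revert z; decide)
        refine ⟨R, hR, ?_, hRf, ?_, fun a ha => ?_⟩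
        · rw [(hR1 _ (by simp [hZg])).2 hZg, hXg]
        · rw [(hR1 e ?_).1 (by rw [hZe]; decide), hZe]
          rcases hXn e he with h | h <;> rw [hZe, h] <;> decide
        · rcases hZn a ha with h | h
          · rw [(hR1 a (by simp [h])).2 h]
            exact (hXn a ha).symm
          · left
            rw [(hR1 a ?_).1 (by rw [h]; decide), h]
            rcases hXn a ha with h' | h' <;> rw [h, h'] <;> decide
    have hRM : R ∈ Mfg.covectors := mem_contraction hMfg hR (by
      rintro a (rfl | rfl)
      exacts [hRf, hRg])
    obtain ⟨C, hC, hCe, hC1⟩ := Mfg.exists_conformal_cocircuit hRM (e := e)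
      (by rw [hRe]; decide)
    refine ⟨C, hC, hCe.trans hRe, fun a ha => ?_⟩
    rcases hC1 a with h | h
    · exact Or.inr h
    · rw [h]; exact hRn a ha
  refine ⟨hcoc, ?_⟩
  have hfin : vt.Finite := by
    obtain ⟨P, hP⟩ := hProg.exists_lift hvt
    exact (Set.finite_Iio n).subset fun a ha => hP.lt ha
  obtain ⟨Y, hY, hY1, -⟩ := exists_covector_pos Mfg hfin le_rfl (fun e he => by
    obtain ⟨Y, hY, h1, h2⟩ := hcoc e he
    exact ⟨Y, hY.1, h1, h2⟩)
  exact ⟨Y, hY, hY1⟩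

end OMHK
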